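/- arXiv:1407.2171 — 2 statements merged into one kernel-verified Lean document; each statement's English description precedes it below -/
import Mathlib

section
/- There exists an absolute constant c > 0 such that for every weighted analytic Hilbert space H_ω, every analytic self-map φ of the unit disk D which is a symbol for H_ω, and every 0 < r < 1: if the pseudo-hyperbolic diameter of φ(D) is greater than r, then β⁻(C_φ) := liminf_{n→∞} [a_n(C_φ)]^{1/n} ≥ exp(−c / log(1/(1−r))). -/
/-!
The bound holds with `c = 2π`. The approximation numbers are bounded below by Bernstein-type
numbers: an operator of rank `< n` kills a nonzero combination of any `n` given vectors
(`approxNumber_ge`), so it suffices to find functions `g₁, …, gₙ` in `H_ω`, of norm growing only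
linearly in `n`, together with points `pⱼ` in a fixed compact subdisc such that
`gᵢ (φ pⱼ) = 0` for `i ≠ j` while `|gⱼ (φ pⱼ)|` is not too small. Point evaluations at the `pⱼ`
are bounded on `H_ω` uniformly in `n` (`hw_eval`): Cauchy's formula for `h²` on circles,
integrated in polar coordinates over an annulus on which `ω` is bounded below.

Choose `a, b` in the disc with `ρ(φ(a), φ(b)) > r` and put `z = φ(a)`, `tanh U = r`. By the
intermediate value theorem on the segment `[a, b]` there are points `pₖ` with
`ρ(z, φ(pₖ)) = tanh (k U / n)`, `0 ≤ k < n` (`exists_points`). The function `gⱼ` is the finite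
Blaschke product with zeros `φ(pₖ)`, `k ≠ j`. It is bounded by `1`, and its derivative is at most
a constant times `n`, which bounds its norm in `H_ω` because `ω` is integrable (`testFn_memHw`).

In the pseudo-hyperbolic metric `z ↦ |z|` is a contraction, so `ρ(φ(pⱼ), φ(pₖ))` is at least
`tanh (|j - k| h)` with `h = U / n`, and `tanh² x ≥ (1 + x⁻²)⁻¹`. Euler's product for the sine
at `i / h` gives `∏_{m ≥ 1} (1 + (m h)⁻²) = sinh (π / h) / (π / h) ≤ exp (π / h)`, and therefore
`|gⱼ (φ pⱼ)| ≥ exp (-π / h) = exp (-π n / U)` (`blaschke_lower`). Altogether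
`a_n ≥ exp (-π n / U) / (A n²)` with `A` independent of `n`, hence `β⁻ ≥ exp (-π / U)`, and
`U = artanh r ≥ ½ log (1 / (1 - r))`.
-/

open MeasureTheory Set Filter
open scoped ENNReal NNReal

noncomputable section

/-- The open unit disk in the complex plane. -/
def unitDisk : Set ℂ := {z : ℂ | ‖z‖ < 1}

/-- The Green function of the unit disk, `g(z,w) = log |(1 - w̄ z)/(z - w)|`,
with value `⊤` on the diagonal. -/
def greenFnE (z w : ℂ) : ℝ≥0∞ :=
  if z = w then ⊤ else ENNReal.ofReal (Real.log ‖(1 - (starRingEnd ℂ) w * z) / (z - w)‖)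

/-- The Green energy `I(μ) = ∬ g(z,w) dμ(z) dμ(w)` of a measure. -/
def greenEnergy (μ : Measure ℂ) : ℝ≥0∞ := ∫⁻ z, ∫⁻ w, greenFnE z w ∂μ ∂μ

/-- `greenV E = V(E)`: the infimum of energies of probability measures supported by a
compact subset of `E`. -/
def greenV (E : Set ℂ) : ℝ≥0∞ :=
  ⨅ (μ : Measure ℂ) (_ : IsProbabilityMeasure μ)
    (_ : ∃ K : Set ℂ, K ⊆ E ∧ IsCompact K ∧ μ Kᶜ = 0), greenEnergy μ

/-- The Green capacity `capa(E) = 1/V(E)` of `E` in the unit disk. -/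
def greenCapa (E : Set ℂ) : ℝ≥0∞ := (greenV E)⁻¹

/-- `e^{-1/capa(E)} = e^{-V(E)}`, with the value `0` when `V(E) = ∞` (i.e. `capa(E) = 0`). -/
def expNegV (E : Set ℂ) : ℝ :=
  if greenV E = ⊤ then 0 else Real.exp (-(greenV E).toReal)

/-- The pseudo-hyperbolic distance on the unit disk. -/
def pseudoDist (z w : ℂ) : ℝ := ‖(z - w) / (1 - (starRingEnd ℂ) z * w)‖

/-- The pseudo-hyperbolic diameter of a set. -/
def pseudoDiam (E : Set ℂ) : ℝ :=
  sSup {d : ℝ | ∃ z ∈ E, ∃ w ∈ E, d = pseudoDist z w}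

/-- The `n`-th approximation number `a_n(T) = inf {‖T - R‖ : rank R < n}`. -/
def approxNumber {E F : Type*} [NormedAddCommGroup E] [NormedAddCommGroup F]
    [NormedSpace ℂ E] [NormedSpace ℂ F] (T : E →L[ℂ] F) (n : ℕ) : ℝ :=
  sInf {c : ℝ | ∃ R : E →L[ℂ] F,
    Module.rank ℂ (LinearMap.range (R : E →ₗ[ℂ] F)) < (n : Cardinal) ∧ c = ‖T - R‖}

/-- The squared norm `‖f‖² = |f(0)|² + ∫_D |f'|² ω dA` (normalized area measure) of the
weighted analytic Hilbert space `H_ω`. -/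
def hwNormSq (ω : ℝ → ℝ) (f : ℂ → ℂ) : ℝ :=
  ‖f 0‖ ^ 2 + (∫ z in unitDisk, ‖deriv f z‖ ^ 2 * ω ‖z‖) / Real.pi

/-- Membership in the weighted analytic Hilbert space `H_ω`. -/
def memHw (ω : ℝ → ℝ) (f : ℂ → ℂ) : Prop :=
  DifferentiableOn ℂ f unitDisk ∧
    IntegrableOn (fun z => ‖deriv f z‖ ^ 2 * ω ‖z‖) unitDisk

/-- The coefficient weights `w_0 = 1`, `w_n = 2 n² ∫_0^1 r^{2n-1} ω(r) dr`. -/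
def wcoef (ω : ℝ → ℝ) (n : ℕ) : ℝ :=
  if n = 0 then 1 else 2 * (n : ℝ) ^ 2 * ∫ r in (0:ℝ)..1, r ^ (2 * n - 1) * ω r

/-- Taylor coefficient of `f` at `0`. -/
def taylorCoeff (f : ℂ → ℂ) (n : ℕ) : ℂ := iteratedDeriv n f 0 / (n.factorial : ℂ)

/-- `(1/2π) ∫_0^{2π} |f(r e^{it})|^p dt`. -/
def hpMean (p : ℝ) (f : ℂ → ℂ) (r : ℝ) : ℝ :=
  (1 / (2 * Real.pi)) *
    ∫ t in (0:ℝ)..(2 * Real.pi), ‖f ((r : ℂ) * Complex.exp ((t : ℂ) * Complex.I))‖ ^ p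

/-- The `H^p` norm. -/
def hpNorm (p : ℝ) (f : ℂ → ℂ) : ℝ :=
  sSup {m : ℝ | ∃ r ∈ Set.Ioo (0:ℝ) 1, m = hpMean p f r ^ (1 / p)}

/-- Membership in the Hardy space `H^p`. -/
def memHp (p : ℝ) (f : ℂ → ℂ) : Prop :=
  DifferentiableOn ℂ f unitDisk ∧
    BddAbove {m : ℝ | ∃ r ∈ Set.Ioo (0:ℝ) 1, m = hpMean p f r ^ (1 / p)}

/-- The squared `H²` norm `‖f‖² = Σ |b_n|²` in terms of Taylor coefficients. -/
def h2NormSq (f : ℂ → ℂ) : ℝ := ∑' n : ℕ, ‖taylorCoeff f n‖ ^ 2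

/-- Membership in the Hardy space `H²`. -/
def memH2 (f : ℂ → ℂ) : Prop :=
  DifferentiableOn ℂ f unitDisk ∧ Summable (fun n : ℕ => ‖taylorCoeff f n‖ ^ 2)

/-- The `n`-th Kolmogorov number. -/
def kolmogorovNumber {E F : Type*} [NormedAddCommGroup E] [NormedAddCommGroup F]
    [NormedSpace ℂ E] [NormedSpace ℂ F] (T : E →L[ℂ] F) (n : ℕ) : ℝ :=
  ⨅ (S : Submodule ℂ F) (_ : Module.rank ℂ S < (n : Cardinal)),
    ⨆ x : {x : E // ‖x‖ ≤ 1}, Metric.infDist (T (x : E)) (S : Set F)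

/-- The `n`-th Gelfand number: infimum of norms of restrictions of `T` to closed
subspaces of codimension `< n`. -/
def gelfandNumber {X : Type*} [NormedAddCommGroup X] [NormedSpace ℂ X]
    (T : X →L[ℂ] X) (n : ℕ) : ℝ :=
  ⨅ (F : Submodule ℂ X) (_ : IsClosed (F : Set X))
    (_ : Module.rank ℂ (X ⧸ F) < (n : Cardinal)),
    ⨆ x : {x : X // x ∈ F ∧ ‖x‖ ≤ 1}, ‖T (x : X)‖

/-- `ε_n(T) = inf_{dim E < n} sup_{x ∈ B_X} dist (T x, T(E))`. -/
def epsApprox {X : Type*} [NormedAddCommGroup X] [NormedSpace ℂ X]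
    (T : X →L[ℂ] X) (n : ℕ) : ℝ :=
  ⨅ (E : Submodule ℂ X) (_ : Module.rank ℂ E < (n : Cardinal)),
    ⨆ x : {x : X // ‖x‖ ≤ 1}, Metric.infDist (T (x : X)) (T '' (E : Set X))

/-! ### Disc automorphisms -/

/-- The disc automorphism `z ↦ (a - z) / (1 - ā z)`, which exchanges `0` and `a`. Its modulus is
`pseudoDist a z`. -/
def moeb (a z : ℂ) : ℂ := (a - z) / (1 - (starRingEnd ℂ) a * z)

lemma moeb_denom_bound {a z : ℂ} (hz : ‖z‖ < 1) :
    1 - ‖a‖ ≤ ‖1 - (starRingEnd ℂ) a * z‖ := by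
  have h1 : ‖(1 : ℂ)‖ - ‖(starRingEnd ℂ) a * z‖ ≤ ‖1 - (starRingEnd ℂ) a * z‖ :=
    norm_sub_norm_le _ _
  have h2 : ‖(starRingEnd ℂ) a * z‖ ≤ ‖a‖ := by
    rw [norm_mul, RCLike.norm_conj]
    exact mul_le_of_le_one_right (norm_nonneg _) hz.le
  rw [norm_one] at h1
  linarith

lemma moeb_denom_ne {a z : ℂ} (ha : ‖a‖ < 1) (hz : ‖z‖ < 1) :
    1 - (starRingEnd ℂ) a * z ≠ 0 := by
  have := moeb_denom_bound (a := a) hz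
  exact norm_pos_iff.1 (by linarith)

/-- The identity `|1 - ā z|² - |a - z|² = (1 - |a|²)(1 - |z|²)`. -/
lemma moeb_identity (a z : ℂ) :
    ‖1 - (starRingEnd ℂ) a * z‖ ^ 2 - ‖a - z‖ ^ 2 = (1 - ‖a‖ ^ 2) * (1 - ‖z‖ ^ 2) := by
  simp only [← Complex.normSq_eq_norm_sq, Complex.normSq_apply, Complex.sub_re, Complex.sub_im,
    Complex.mul_re, Complex.mul_im, Complex.one_re, Complex.one_im, Complex.conj_re,
    Complex.conj_im]
  ring

lemma moeb_norm_lt {a z : ℂ} (ha : ‖a‖ < 1) (hz : ‖z‖ < 1) : ‖moeb a z‖ < 1 := by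
  have hd := norm_pos_iff.2 (moeb_denom_ne ha hz)
  rw [moeb, norm_div, div_lt_one hd]
  have h := moeb_identity a z
  have : 0 < (1 - ‖a‖ ^ 2) * (1 - ‖z‖ ^ 2) := by
    have := norm_nonneg a
    have := norm_nonneg z
    apply mul_pos <;> nlinarith
  exact lt_of_pow_lt_pow_left₀ 2 hd.le (by linarith)

lemma moeb_hasDerivAt {a z : ℂ} (ha : ‖a‖ < 1) (hz : ‖z‖ < 1) :
    HasDerivAt (moeb a)
      (((-1) * (1 - (starRingEnd ℂ) a * z) - (a - z) * (-(starRingEnd ℂ) a)) /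
        (1 - (starRingEnd ℂ) a * z) ^ 2) z := by
  have h1 : HasDerivAt (fun z : ℂ => a - z) (-1) z := (hasDerivAt_id z).const_sub a
  have h2 : HasDerivAt (fun z : ℂ => 1 - (starRingEnd ℂ) a * z) (-(starRingEnd ℂ) a) z := by
    simpa using ((hasDerivAt_id z).const_mul ((starRingEnd ℂ) a)).const_sub 1
  exact h1.div h2 (moeb_denom_ne ha hz)

lemma moeb_deriv_bound {a z : ℂ} (ha : ‖a‖ < 1) (hz : ‖z‖ < 1) :
    ‖deriv (moeb a) z‖ ≤ 1 / (1 - ‖a‖) ^ 2 := by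
  rw [(moeb_hasDerivAt ha hz).deriv, norm_div, norm_pow]
  have hn : (-1) * (1 - (starRingEnd ℂ) a * z) - (a - z) * (-(starRingEnd ℂ) a)
      = ((‖a‖ ^ 2 - 1 : ℝ) : ℂ) := by
    have := Complex.mul_conj' a
    push_cast
    linear_combination this
  rw [hn, Complex.norm_real]
  have h1 : ‖‖a‖ ^ 2 - 1‖ ≤ 1 := by
    have := norm_nonneg a
    rw [Real.norm_eq_abs, abs_le]
    constructor <;> nlinarith
  have h3 := moeb_denom_bound (a := a) hz
  have h4 : 0 < 1 - ‖a‖ := by linarith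
  gcongr

/-- On the disc with its pseudo-hyperbolic metric, `z ↦ |z|` is a contraction. With
`|v| = tanh x` and `|w| = tanh y` this gives `ρ(v, w) ≥ tanh |x - y| ≥ u / √(1 + u²)`, where
`u = x - y`. -/
lemma moeb_lower {v w : ℂ} {x y : ℝ} (hv : ‖v‖ = Real.tanh x) (hw : ‖w‖ = Real.tanh y)
    (hxy : x ≠ y) : (1 + 1 / (x - y) ^ 2)⁻¹ ≤ ‖moeb v w‖ ^ 2 := by
  have hv1 : ‖v‖ < 1 := hv ▸ Real.tanh_lt_one x
  have hw1 : ‖w‖ < 1 := hw ▸ Real.tanh_lt_one y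
  have hd := norm_pos_iff.2 (moeb_denom_ne hv1 hw1)
  have hid := moeb_identity v w
  have hden : 1 - ‖v‖ * ‖w‖ ≤ ‖1 - (starRingEnd ℂ) v * w‖ := by
    have h1 : ‖(1 : ℂ)‖ - ‖(starRingEnd ℂ) v * w‖ ≤ ‖1 - (starRingEnd ℂ) v * w‖ :=
      norm_sub_norm_le _ _
    rwa [norm_mul, RCLike.norm_conj, norm_one] at h1
  have hcx := Real.cosh_pos x
  have hcy := Real.cosh_pos y
  set N := ‖1 - (starRingEnd ℂ) v * w‖
  have hc : 1 + (x - y) ^ 2 ≤ Real.cosh (x - y) ^ 2 := by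
    rw [Real.cosh_sq]
    have : |x - y| ≤ |Real.sinh (x - y)| := by
      rw [Real.abs_sinh]
      exact Real.self_le_sinh_iff.2 (abs_nonneg _)
    have := sq_le_sq.2 this
    linarith
  have hcp : Real.cosh (x - y) = Real.cosh x * Real.cosh y * (1 - ‖v‖ * ‖w‖) := by
    rw [hv, hw, Real.tanh_eq_sinh_div_cosh, Real.tanh_eq_sinh_div_cosh, Real.cosh_sub]
    field_simp
  have hsech : (1 - ‖v‖ ^ 2) * (1 - ‖w‖ ^ 2) * (Real.cosh x * Real.cosh y) ^ 2 = 1 := by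
    rw [hv, hw, Real.tanh_eq_sinh_div_cosh, Real.tanh_eq_sinh_div_cosh]
    field_simp
    have h1 := Real.cosh_sq x
    have h2 := Real.cosh_sq y
    rw [show Real.cosh x ^ 2 - Real.sinh x ^ 2 = 1 by linarith,
      show Real.cosh y ^ 2 - Real.sinh y ^ 2 = 1 by linarith]
    ring
  have hu : 0 < (x - y) ^ 2 := by
    have := sub_ne_zero.2 hxy
    positivity
  have hmul : 0 < 1 - ‖v‖ * ‖w‖ := by nlinarith [norm_nonneg v, norm_nonneg w]
  have hkey : (1 - ‖v‖ ^ 2) * (1 - ‖w‖ ^ 2) * (1 + (x - y) ^ 2) ≤ N ^ 2 := by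
    have hP : 0 ≤ (1 - ‖v‖ ^ 2) * (1 - ‖w‖ ^ 2) := by
      have := norm_nonneg v
      have := norm_nonneg w
      apply mul_nonneg <;> nlinarith
    calc _ ≤ (1 - ‖v‖ ^ 2) * (1 - ‖w‖ ^ 2) * Real.cosh (x - y) ^ 2 := by gcongr
      _ = ((1 - ‖v‖ ^ 2) * (1 - ‖w‖ ^ 2) * (Real.cosh x * Real.cosh y) ^ 2) *
          (1 - ‖v‖ * ‖w‖) ^ 2 := by rw [hcp]; ring
      _ = (1 - ‖v‖ * ‖w‖) ^ 2 := by rw [hsech, one_mul]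
      _ ≤ N ^ 2 := by gcongr
  rw [moeb, norm_div, div_pow, le_div_iff₀ (by positivity)]
  have : (1 + 1 / (x - y) ^ 2)⁻¹ = (x - y) ^ 2 / (1 + (x - y) ^ 2) := by
    field_simp
    ring
  rw [this, div_mul_eq_mul_div, div_le_iff₀ (by positivity)]
  nlinarith

/-! ### Products of pseudo-hyperbolic distances -/

/-- The partial products of Euler's formula for `sinh (π / h) / (π / h)`, which is at most
`exp (π / h)`. -/
lemma prod_le_exp {h : ℝ} (hh : 0 < h) (n : ℕ) :
    ∏ j ∈ Finset.range n, (1 + 1 / (((j : ℝ) + 1) * h) ^ 2) ≤ Real.exp (Real.pi / h) := by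
  -- Euler's product for `sin (π z)`, taken at `z = i / h`, where its factors are real and `≥ 1`.
  have hlim := Complex.tendsto_euler_sin_prod (Complex.I / h)
  have hre := (Complex.continuous_im.tendsto _).comp hlim
  have e1 : ∀ n : ℕ, ((Real.pi : ℂ) * (Complex.I / h) * ∏ j ∈ Finset.range n,
      ((1 : ℂ) - (Complex.I / h) ^ 2 / ((j : ℂ) + 1) ^ 2)).im
      = Real.pi / h * ∏ j ∈ Finset.range n, (1 + 1 / (((j : ℝ) + 1) * h) ^ 2) := by
    intro n
    have : ∀ j : ℕ, (1 : ℂ) - (Complex.I / h) ^ 2 / ((j : ℂ) + 1) ^ 2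
        = ((1 + 1 / (((j : ℝ) + 1) * h) ^ 2 : ℝ) : ℂ) := by
      intro j
      push_cast
      rw [div_pow, Complex.I_sq, mul_pow, div_div, mul_comm ((h : ℂ) ^ 2), neg_div, sub_neg_eq_add]
    simp_rw [this]
    rw [← Complex.ofReal_prod, mul_div_assoc', mul_comm (Real.pi : ℂ), mul_div_assoc,
      ← Complex.ofReal_div, mul_assoc, ← Complex.ofReal_mul, Complex.I_mul_im, Complex.ofReal_re]
  have e2 : (Complex.sin ((Real.pi : ℂ) * (Complex.I / h))).im = Real.sinh (Real.pi / h) := by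
    rw [show (Real.pi : ℂ) * (Complex.I / h) = ((Real.pi / h : ℝ) : ℂ) * Complex.I by
      push_cast; ring, Complex.sin_mul_I, ← Complex.ofReal_sinh, Complex.mul_I_im,
      Complex.ofReal_re]
  rw [e2] at hre
  have hmono : Monotone fun n : ℕ => Real.pi / h *
      ∏ j ∈ Finset.range n, (1 + 1 / (((j : ℝ) + 1) * h) ^ 2) := by
    refine monotone_nat_of_le_succ fun n => ?_
    have hp : 0 < ∏ j ∈ Finset.range n, (1 + 1 / (((j : ℝ) + 1) * h) ^ 2) :=
      Finset.prod_pos fun i _ => by positivity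
    have := Real.pi_pos
    rw [Finset.prod_range_succ]
    gcongr
    exact le_mul_of_one_le_right hp.le (by simp; positivity)
  have hle := hmono.ge_of_tendsto (hre.congr e1) n
  have hx : 0 < Real.pi / h := div_pos Real.pi_pos hh
  set x := Real.pi / h
  have hs : Real.sinh x ≤ x * Real.exp x := by
    rw [Real.sinh_eq]
    have h1 := Real.add_one_le_exp (-(2 * x))
    have h2 : Real.exp (-x) = Real.exp x * Real.exp (-(2 * x)) := by
      rw [← Real.exp_add]; ring_nf
    have := Real.exp_pos x
    rw [h2]
    nlinarith
  exact le_of_mul_le_mul_left (hle.trans hs) hx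

lemma prod_erase_le_exp {h : ℝ} (hh : 0 < h) {n j : ℕ} (hj : j < n) :
    ∏ k ∈ (Finset.range n).erase j, (1 + 1 / ((j : ℝ) * h - k * h) ^ 2)
      ≤ Real.exp (2 * Real.pi / h) := by
  obtain ⟨m, rfl⟩ : ∃ m, n = (j + 1) + m := ⟨n - (j + 1), by omega⟩
  have hset : (Finset.range (j + 1 + m)).erase j =
      Finset.range j ∪ (Finset.range m).image (fun i => j + 1 + i) := by
    ext k
    simp only [Finset.mem_erase, Finset.mem_range, Finset.mem_union, Finset.mem_image]
    constructor
    · rintro ⟨h1, h2⟩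
      rcases lt_or_gt_of_ne h1 with h | h
      · exact Or.inl h
      · exact Or.inr ⟨k - (j + 1), by omega, by omega⟩
    · rintro (h | ⟨a, ha, rfl⟩) <;> omega
  have hdisj : Disjoint (Finset.range j) ((Finset.range m).image (fun i => j + 1 + i)) := by
    rw [Finset.disjoint_left]
    intro k hk hk'
    simp only [Finset.mem_range, Finset.mem_image] at hk hk'
    obtain ⟨a, _, rfl⟩ := hk'
    omega
  rw [hset, Finset.prod_union hdisj, Finset.prod_image (fun a _ b _ hab => by simpa using hab),
    ← Finset.prod_range_reflect]
  have h1 : ∏ i ∈ Finset.range j, (1 + 1 / ((j : ℝ) * h - ((j - 1 - i : ℕ) : ℝ) * h) ^ 2)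
      = ∏ i ∈ Finset.range j, (1 + 1 / (((i : ℝ) + 1) * h) ^ 2) := by
    refine Finset.prod_congr rfl fun i hi => ?_
    have hi := Finset.mem_range.1 hi
    rw [Nat.cast_sub (by omega), Nat.cast_sub (by omega)]
    push_cast
    ring_nf
  have h2 : ∏ i ∈ Finset.range m, (1 + 1 / ((j : ℝ) * h - ((j + 1 + i : ℕ) : ℝ) * h) ^ 2)
      = ∏ i ∈ Finset.range m, (1 + 1 / (((i : ℝ) + 1) * h) ^ 2) := by
    refine Finset.prod_congr rfl fun i hi => ?_
    push_cast
    ring_nf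
  rw [h1, h2, show 2 * Real.pi / h = Real.pi / h + Real.pi / h by ring, Real.exp_add]
  exact mul_le_mul (prod_le_exp hh j) (prod_le_exp hh m)
    (Finset.prod_nonneg fun i _ => by positivity) (Real.exp_pos _).le

/-- For points `v_k` of moduli `tanh (k h)`, every product `∏_{k ≠ j} ρ(v_j, v_k)` is at least
`exp (-π / h)`, whatever the arguments of the points. -/
lemma blaschke_lower {h : ℝ} (hh : 0 < h) {n j : ℕ} (hj : j < n) {v : ℕ → ℂ}
    (hv : ∀ k < n, ‖v k‖ = Real.tanh (k * h)) :
    Real.exp (-(Real.pi / h)) ≤ ∏ k ∈ (Finset.range n).erase j, ‖moeb (v k) (v j)‖ := by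
  have hsq : Real.exp (-(Real.pi / h)) ^ 2 ≤
      (∏ k ∈ (Finset.range n).erase j, ‖moeb (v k) (v j)‖) ^ 2 := by
    calc Real.exp (-(Real.pi / h)) ^ 2 = (Real.exp (2 * Real.pi / h))⁻¹ := by
          rw [← Real.exp_neg, ← Real.exp_nat_mul]
          congr 1
          push_cast
          ring
      _ ≤ (∏ k ∈ (Finset.range n).erase j, (1 + 1 / ((j : ℝ) * h - k * h) ^ 2))⁻¹ :=
          inv_anti₀ (Finset.prod_pos fun i _ => by positivity) (prod_erase_le_exp hh hj)
      _ = ∏ k ∈ (Finset.range n).erase j, (1 + 1 / ((k : ℝ) * h - j * h) ^ 2)⁻¹ := by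
          rw [← Finset.prod_inv_distrib]
          refine Finset.prod_congr rfl fun k _ => ?_
          rw [← neg_sub, neg_sq]
      _ ≤ _ := by
          rw [← Finset.prod_pow]
          refine Finset.prod_le_prod (fun k _ => by positivity) fun k hk => ?_
          rw [Finset.mem_erase, Finset.mem_range] at hk
          refine moeb_lower (hv k hk.2) (hv j hj) fun hkj => hk.1 ?_
          exact_mod_cast mul_right_cancel₀ hh.ne' hkj
  exact (pow_le_pow_iff_left₀ (Real.exp_pos _).le
    (Finset.prod_nonneg fun _ _ => norm_nonneg _) two_ne_zero).1 hsq

/-! ### Test functions -/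

lemma isOpen_unitDisk : IsOpen unitDisk := isOpen_lt continuous_norm continuous_const

lemma unitDisk_eq_ball : unitDisk = Metric.ball (0 : ℂ) 1 := by
  ext z
  simp [unitDisk]

/-- Analytic functions on the disc, bounded by `1`, whose derivative is bounded by `C`. -/
def TestFn (C : ℝ) (f : ℂ → ℂ) : Prop :=
  DifferentiableOn ℂ f unitDisk ∧ ∀ z ∈ unitDisk, ‖f z‖ ≤ 1 ∧ ‖deriv f z‖ ≤ C

lemma TestFn.prod {ι : Type*} {f : ι → ℂ → ℂ} {C : ℝ} (s : Finset ι)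
    (hf : ∀ i ∈ s, TestFn C (f i)) : TestFn (s.card * C) (fun z => ∏ i ∈ s, f i z) := by
  classical
  induction s using Finset.induction_on with
  | empty => exact ⟨by simp [differentiableOn_const], by simp⟩
  | insert a s ha ih =>
    have h1 := hf a (Finset.mem_insert_self _ _)
    have h2 := ih fun i hi => hf i (Finset.mem_insert_of_mem hi)
    simp only [Finset.prod_insert ha]
    refine ⟨h1.1.mul h2.1, fun z hz => ⟨?_, ?_⟩⟩
    · rw [norm_mul]
      exact mul_le_one₀ (h1.2 z hz).1 (norm_nonneg _) (h2.2 z hz).1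
    · have d1 := h1.1.differentiableAt (isOpen_unitDisk.mem_nhds hz)
      have d2 := h2.1.differentiableAt (isOpen_unitDisk.mem_nhds hz)
      rw [deriv_fun_mul d1 d2, Finset.card_insert_of_notMem ha]
      refine (norm_add_le _ _).trans ?_
      rw [norm_mul, norm_mul]
      have b1 := mul_le_mul (h1.2 z hz).2 (h2.2 z hz).1 (norm_nonneg _)
        ((norm_nonneg _).trans (h1.2 z hz).2)
      have b2 := mul_le_mul (h1.2 z hz).1 (h2.2 z hz).2 (norm_nonneg _) zero_le_one
      push_cast
      linarith

lemma testFn_moeb_comp {a b : ℂ} {s : ℝ} (ha : ‖a‖ ≤ s) (hs : s < 1) (hb : ‖b‖ < 1) :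
    TestFn (1 / (1 - s) ^ 2 * (1 / (1 - ‖b‖) ^ 2)) (fun z => moeb a (moeb b z)) := by
  have ha1 := ha.trans_lt hs
  have key : ∀ z ∈ unitDisk, HasDerivAt (fun z => moeb a (moeb b z))
      (deriv (moeb a) (moeb b z) * deriv (moeb b) z) z := fun z hz =>
    HasDerivAt.comp z
      (moeb_hasDerivAt ha1 (moeb_norm_lt hb hz)).differentiableAt.hasDerivAt
      (moeb_hasDerivAt hb hz).differentiableAt.hasDerivAt
  refine ⟨fun z hz => (key z hz).differentiableAt.differentiableWithinAt, fun z hz => ⟨?_, ?_⟩⟩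
  · exact (moeb_norm_lt ha1 (moeb_norm_lt hb hz)).le
  · rw [(key z hz).deriv, norm_mul]
    have h1 := moeb_deriv_bound ha1 (moeb_norm_lt hb hz)
    have h2 := moeb_deriv_bound hb hz
    have h3 : 1 / (1 - ‖a‖) ^ 2 ≤ 1 / (1 - s) ^ 2 := by
      have : 0 < 1 - s := by linarith
      gcongr
    exact mul_le_mul (h1.trans h3) h2 (norm_nonneg _) (by positivity)

lemma integrableOn_weight {ω : ℝ → ℝ} (hω : ContinuousOn ω (Set.Ico 0 1))
    (hωi : IntegrableOn ω (Set.Ico 0 1)) :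
    IntegrableOn (fun z : ℂ => ω ‖z‖) unitDisk := by
  rw [unitDisk_eq_ball, integrableOn_fun_norm_addHaar]
  have h0 : IntegrableOn ω (Set.Ioo 0 1) := hωi.mono_set Set.Ioo_subset_Ico_self
  simp only [Complex.finrank_real_complex, Nat.add_one_sub_one, pow_one, smul_eq_mul]
  refine Integrable.mono h0 ?_ ?_
  · exact (continuousOn_id.mul (hω.mono Set.Ioo_subset_Ico_self)).aestronglyMeasurable
      measurableSet_Ioo
  · refine (ae_restrict_iff' measurableSet_Ioo).2 (ae_of_all _ fun y hy => ?_)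
    rw [norm_mul]
    refine mul_le_of_le_one_left (norm_nonneg _) ?_
    rw [Real.norm_eq_abs, abs_of_pos hy.1]
    exact hy.2.le

lemma continuousOn_weight {ω : ℝ → ℝ} (hω : ContinuousOn ω (Set.Ico 0 1)) :
    ContinuousOn (fun z : ℂ => ω ‖z‖) unitDisk :=
  hω.comp continuous_norm.continuousOn fun z hz => ⟨norm_nonneg z, hz⟩

lemma continuousOn_deriv_unitDisk {f : ℂ → ℂ} (hf : DifferentiableOn ℂ f unitDisk) :
    ContinuousOn (deriv f) unitDisk := (hf.deriv isOpen_unitDisk).continuousOn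

/-- A test function lies in `H_ω`, its norm being controlled by the integral of the weight over the
disc. -/
lemma testFn_memHw {ω : ℝ → ℝ} (hω : ContinuousOn ω (Set.Ico 0 1))
    (hpos : ∀ r ∈ Set.Ico (0:ℝ) 1, 0 < ω r)
    (hωi : IntegrableOn ω (Set.Ico 0 1)) {C : ℝ} {f : ℂ → ℂ} (hf : TestFn C f) :
    memHw ω f ∧ hwNormSq ω f ≤ 1 + C ^ 2 * (∫ z in unitDisk, ω ‖z‖) / Real.pi := by
  have hI := integrableOn_weight hω hωi
  have hbd : ∀ z ∈ unitDisk, ‖deriv f z‖ ^ 2 * ω ‖z‖ ≤ C ^ 2 * ω ‖z‖ := fun z hz =>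
    mul_le_mul_of_nonneg_right (pow_le_pow_left₀ (norm_nonneg _) (hf.2 z hz).2 2)
      (hpos _ ⟨norm_nonneg z, hz⟩).le
  have hI2 : IntegrableOn (fun z => ‖deriv f z‖ ^ 2 * ω ‖z‖) unitDisk := by
    refine Integrable.mono' (hI.const_mul (C ^ 2)) ?_ ?_
    · exact (((continuousOn_deriv_unitDisk hf.1).norm.pow 2).mul
        (continuousOn_weight hω)).aestronglyMeasurable isOpen_unitDisk.measurableSet
    · refine (ae_restrict_iff' isOpen_unitDisk.measurableSet).2 (ae_of_all _ fun z hz => ?_)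
      rw [Real.norm_eq_abs, abs_of_nonneg]
      · exact hbd z hz
      · exact mul_nonneg (by positivity) (hpos _ ⟨norm_nonneg z, hz⟩).le
  refine ⟨⟨hf.1, hI2⟩, ?_⟩
  have h0 : (0 : ℂ) ∈ unitDisk := by simp [unitDisk]
  have h1 : ‖f 0‖ ^ 2 ≤ 1 := pow_le_one₀ (norm_nonneg _) (hf.2 0 h0).1
  have h2 : ∫ z in unitDisk, ‖deriv f z‖ ^ 2 * ω ‖z‖ ≤ C ^ 2 * ∫ z in unitDisk, ω ‖z‖ := by
    rw [← integral_const_mul]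
    exact setIntegral_mono_on hI2 (hI.const_mul _) isOpen_unitDisk.measurableSet hbd
  rw [hwNormSq]
  have := Real.pi_pos
  gcongr

lemma hwNormSq_congr {ω : ℝ → ℝ} {f g : ℂ → ℂ} (h : ∀ z ∈ unitDisk, f z = g z) :
    hwNormSq ω f = hwNormSq ω g := by
  have h0 : (0 : ℂ) ∈ unitDisk := by simp [unitDisk]
  rw [hwNormSq, hwNormSq, h 0 h0]
  congr 2
  refine setIntegral_congr_fun isOpen_unitDisk.measurableSet fun z hz => ?_
  have : f =ᶠ[nhds z] g := Filter.eventually_of_mem (isOpen_unitDisk.mem_nhds hz) h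
  simp only [this.deriv_eq]

/-! ### Point evaluations on `H_ω` -/

/-- Sub-mean value estimate: Cauchy's formula for `h²` on the circle of radius `R`. -/
lemma sq_le_circle {h : ℂ → ℂ} (hh : DifferentiableOn ℂ h unitDisk) {ρ R : ℝ}
    (hρR : ρ < R) (hR : R < 1) {p : ℂ} (hp : ‖p‖ ≤ ρ) :
    2 * Real.pi * ((R - ρ) * ‖h p‖ ^ 2) ≤
      R * ∫ θ in (-Real.pi)..Real.pi, ‖h (circleMap 0 R θ)‖ ^ 2 := by
  have hR0 : 0 < R := ((norm_nonneg p).trans hp).trans_lt hρR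
  have hcb : Metric.closedBall (0 : ℂ) R ⊆ unitDisk := fun z hz => by
    have : ‖z‖ ≤ R := by simpa using hz
    exact this.trans_lt hR
  have hsq : DifferentiableOn ℂ (fun z => h z ^ 2) unitDisk := hh.pow 2
  have hd : DiffContOnCl ℂ (fun z => h z ^ 2) (Metric.ball 0 |R|) := by
    rw [abs_of_pos hR0]
    exact (hsq.mono hcb).diffContOnCl_ball subset_rfl
  have hpR : ‖p‖ < R := hp.trans_lt hρR
  have hpb : p ∈ Metric.ball (0 : ℂ) |R| := by simpa [abs_of_pos hR0] using hpR
  have hmv := DiffContOnCl.circleAverage_smul_div hd hpb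
  have hcm : ∀ θ, circleMap 0 R θ ∈ unitDisk := fun θ =>
    hcb (by simpa using (by simp [abs_of_pos hR0] : ‖circleMap 0 R θ‖ ≤ R))
  have hcont : Continuous fun θ : ℝ => ‖h (circleMap 0 R θ)‖ ^ 2 :=
    ((hh.continuousOn.comp_continuous (continuous_circleMap 0 R) hcm).norm.pow 2)
  have hper : Function.Periodic (fun θ : ℝ => ‖h (circleMap 0 R θ)‖ ^ 2) (2 * Real.pi) :=
    fun θ => by simp only [periodic_circleMap 0 R θ]
  have hshift := hper.intervalIntegral_add_eq 0 (-Real.pi)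
  rw [zero_add, show -Real.pi + 2 * Real.pi = Real.pi by ring] at hshift
  rw [← hshift]
  rw [Real.circleAverage_def] at hmv
  have hpi := Real.pi_pos
  have hn : ‖∫ θ in (0:ℝ)..2 * Real.pi, ((circleMap 0 R θ - 0) / (circleMap 0 R θ - p)) •
      h (circleMap 0 R θ) ^ 2‖ ≤
      ∫ θ in (0:ℝ)..2 * Real.pi, R / (R - ρ) * ‖h (circleMap 0 R θ)‖ ^ 2 := by
    refine intervalIntegral.norm_integral_le_of_norm_le (by positivity)
      (ae_of_all _ fun θ _ => ?_) ((continuous_const.mul hcont).intervalIntegrable _ _)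
    rw [norm_smul, norm_pow, norm_div, sub_zero]
    have h1 : ‖circleMap 0 R θ‖ = R := by simp [abs_of_pos hR0]
    have h2 : R - ρ ≤ ‖circleMap 0 R θ - p‖ := by
      have := norm_sub_norm_le (circleMap 0 R θ) p
      linarith
    have h3 : 0 < R - ρ := by linarith
    rw [h1]
    gcongr
  rw [intervalIntegral.integral_const_mul] at hn
  have h3 : 0 < R - ρ := by linarith
  set J := ∫ θ in (0:ℝ)..2 * Real.pi, ‖h (circleMap 0 R θ)‖ ^ 2
  have h4 : ‖h p‖ ^ 2 * (2 * Real.pi) ≤ R / (R - ρ) * J := by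
    rw [← norm_pow, ← hmv, norm_smul, norm_inv,
      Real.norm_of_nonneg (by positivity : 0 ≤ 2 * Real.pi)]
    rw [mul_comm _⁻¹, inv_mul_cancel_right₀ (by positivity)]
    exact hn
  rw [div_mul_eq_mul_div, le_div_iff₀ h3] at h4
  linarith

/-- Evaluation at points of a compact subdisc is controlled by the weighted Bergman norm. -/
lemma bergman_eval {ω : ℝ → ℝ} (hω : ContinuousOn ω (Set.Ico 0 1))
    (hpos : ∀ r ∈ Set.Ico (0:ℝ) 1, 0 < ω r) {ρ : ℝ} (hρ0 : 0 ≤ ρ) (hρ : ρ < 1) :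
    ∃ κ : ℝ, 0 < κ ∧ ∀ h : ℂ → ℂ, DifferentiableOn ℂ h unitDisk →
      IntegrableOn (fun z => ‖h z‖ ^ 2 * ω ‖z‖) unitDisk →
      ∀ p : ℂ, ‖p‖ ≤ ρ → κ * ‖h p‖ ^ 2 ≤ ∫ z in unitDisk, ‖h z‖ ^ 2 * ω ‖z‖ := by
  set R₁ := (1 + 2 * ρ) / 3 with hR₁
  set R₂ := (2 + ρ) / 3 with hR₂
  have h1 : ρ < R₁ := by linarith
  have h2 : R₁ < R₂ := by linarith
  have h3 : R₂ < 1 := by linarith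
  have hωI : ContinuousOn ω (Set.Icc R₁ R₂) :=
    hω.mono fun x hx => ⟨by linarith [hx.1], by linarith [hx.2]⟩
  have hωpos : ∀ x ∈ Set.Icc R₁ R₂, 0 < ω x :=
    fun x hx => hpos x ⟨by linarith [hx.1], by linarith [hx.2]⟩
  have hcκ : ContinuousOn (fun R => (R - ρ) * ω R) (Set.Icc R₁ R₂) :=
    (continuousOn_id.sub continuousOn_const).mul hωI
  refine ⟨2 * Real.pi * ∫ R in Set.Ioo R₁ R₂, (R - ρ) * ω R, ?_, ?_⟩
  · have : 0 < ∫ R in R₁..R₂, (R - ρ) * ω R := by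
      refine intervalIntegral.intervalIntegral_pos_of_pos_on ?_ ?_ h2
      · exact ContinuousOn.intervalIntegrable (by rwa [Set.uIcc_of_le h2.le])
      · intro x hx
        exact mul_pos (by linarith [hx.1]) (hωpos x (Set.Ioo_subset_Icc_self hx))
    rw [intervalIntegral.integral_of_le h2.le, integral_Ioc_eq_integral_Ioo] at this
    have := Real.pi_pos
    positivity
  intro h hh hωi p hp
  set F : ℂ → ℝ := fun z => ‖h z‖ ^ 2 * ω ‖z‖ with hF
  set S : Set ℂ := {z | ‖z‖ ∈ Set.Ioo R₁ R₂} with hS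
  have hSm : MeasurableSet S := (isOpen_Ioo.preimage continuous_norm).measurableSet
  have hSD : S ⊆ unitDisk := fun z hz => lt_trans hz.2 h3
  have hstep1 : ∫ z in S, F z ≤ ∫ z in unitDisk, F z := by
    refine setIntegral_mono_set hωi ?_ hSD.eventuallyLE
    refine (ae_restrict_iff' isOpen_unitDisk.measurableSet).2 (ae_of_all _ fun z hz => ?_)
    exact mul_nonneg (by positivity) (hpos _ ⟨norm_nonneg z, hz⟩).le
  -- On the annulus `R₁ < |z| < R₂` polar coordinates apply, with a continuous integrand.
  set G : ℝ × ℝ → ℝ := fun q => q.1 * (‖h (circleMap 0 q.1 q.2)‖ ^ 2 * ω q.1) with hG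
  have hpolar : ∀ q : ℝ × ℝ, Complex.polarCoord.symm q = circleMap 0 q.1 q.2 := by
    intro q
    rw [Complex.polarCoord_symm_apply, circleMap_zero, Complex.exp_mul_I, Complex.ofReal_cos,
      Complex.ofReal_sin]
  have hstep2 : ∫ z in S, F z = ∫ q in Set.Ioo R₁ R₂ ×ˢ Set.Ioo (-Real.pi) Real.pi, G q := by
    rw [← integral_indicator hSm, ← Complex.integral_comp_polarCoord_symm,
      ← integral_indicator (measurableSet_Ioo.prod measurableSet_Ioo),
      ← integral_indicator polarCoord.open_target.measurableSet]
    congr 1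
    ext ⟨R, θ⟩
    by_cases hθ : θ ∈ Set.Ioo (-Real.pi) Real.pi
    · by_cases hRm : R ∈ Set.Ioo R₁ R₂
      · have hR0 : 0 < R := by linarith [hRm.1]
        rw [Set.indicator_of_mem (show (R, θ) ∈ polarCoord.target from ⟨hR0, hθ⟩),
          Set.indicator_of_mem (show (R, θ) ∈ Set.Ioo R₁ R₂ ×ˢ Set.Ioo (-Real.pi) Real.pi from
            ⟨hRm, hθ⟩), hpolar, Set.indicator_of_mem]
        · simp [hF, hG, abs_of_pos hR0]
        · simpa [hS, abs_of_pos hR0] using hRm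
      · rw [Set.indicator_of_notMem (s := Set.Ioo R₁ R₂ ×ˢ _) (fun hm => hRm hm.1)]
        by_cases hR0 : 0 < R
        · rw [Set.indicator_of_mem (show (R, θ) ∈ polarCoord.target from ⟨hR0, hθ⟩),
            hpolar, Set.indicator_of_notMem, smul_zero]
          simpa [hS, abs_of_pos hR0] using hRm
        · exact Set.indicator_of_notMem (fun hm => hR0 hm.1) _
    · rw [Set.indicator_of_notMem (fun hm => hθ hm.2), Set.indicator_of_notMem (fun hm => hθ hm.2)]
  have hGc : ContinuousOn G (Set.Icc R₁ R₂ ×ˢ Set.Icc (-Real.pi) Real.pi) := by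
    have hc1 : ContinuousOn (fun q : ℝ × ℝ => h (circleMap 0 q.1 q.2))
        (Set.Icc R₁ R₂ ×ˢ Set.Icc (-Real.pi) Real.pi) := by
      refine hh.continuousOn.comp (by fun_prop) fun q hq => ?_
      have : 0 < q.1 := by linarith [hq.1.1]
      have h4 : ‖circleMap 0 q.1 q.2‖ = q.1 := by simp [abs_of_pos this]
      change ‖circleMap 0 q.1 q.2‖ < 1
      linarith [hq.1.2]
    exact continuousOn_fst.mul ((hc1.norm.pow 2).mul
      (hωI.comp continuousOn_fst fun q hq => hq.1))
  have hGi : IntegrableOn G (Set.Ioo R₁ R₂ ×ˢ Set.Ioo (-Real.pi) Real.pi)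
      ((volume : Measure ℝ).prod volume) :=
    (hGc.integrableOn_compact (isCompact_Icc.prod isCompact_Icc)).mono_set
      (Set.prod_mono Set.Ioo_subset_Icc_self Set.Ioo_subset_Icc_self)
  refine le_trans ?_ (hstep2 ▸ hstep1)
  rw [Measure.volume_eq_prod, setIntegral_prod G hGi]
  have hint2 : IntegrableOn (fun R => ∫ θ in Set.Ioo (-Real.pi) Real.pi, G (R, θ))
      (Set.Ioo R₁ R₂) := by
    have := hGi
    rw [IntegrableOn, ← Measure.prod_restrict] at this
    exact this.integral_prod_left
  have hint1 : IntegrableOn (fun R => 2 * Real.pi * ‖h p‖ ^ 2 * ((R - ρ) * ω R))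
      (Set.Ioo R₁ R₂) :=
    ((hcκ.integrableOn_compact isCompact_Icc).mono_set Set.Ioo_subset_Icc_self).const_mul _
  calc 2 * Real.pi * (∫ R in Set.Ioo R₁ R₂, (R - ρ) * ω R) * ‖h p‖ ^ 2
      = ∫ R in Set.Ioo R₁ R₂, 2 * Real.pi * ‖h p‖ ^ 2 * ((R - ρ) * ω R) := by
        rw [integral_const_mul]; ring
    _ ≤ _ := by
        refine setIntegral_mono_on hint1 hint2 measurableSet_Ioo fun R hR => ?_
        have hwR := hωpos R (Set.Ioo_subset_Icc_self hR)
        have hc := sq_le_circle hh (h1.trans hR.1) (hR.2.trans h3) hp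
        have hpi := Real.pi_pos
        have e : ∫ θ in Set.Ioo (-Real.pi) Real.pi, G (R, θ) =
            ω R * (R * ∫ θ in (-Real.pi)..Real.pi, ‖h (circleMap 0 R θ)‖ ^ 2) := by
          rw [intervalIntegral.integral_of_le (by linarith), integral_Ioc_eq_integral_Ioo,
            ← integral_const_mul, ← integral_const_mul]
          congr 1
          ext θ
          simp only [hG]
          ring
        rw [e]
        calc _ = ω R * (2 * Real.pi * ((R - ρ) * ‖h p‖ ^ 2)) := by ring
          _ ≤ _ := by gcongr

/-- Point evaluations are bounded on `H_ω`, uniformly over compact subdiscs. -/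
lemma hw_eval {ω : ℝ → ℝ} (hω : ContinuousOn ω (Set.Ico 0 1))
    (hpos : ∀ r ∈ Set.Ico (0:ℝ) 1, 0 < ω r) {ρ : ℝ} (hρ0 : 0 ≤ ρ) (hρ : ρ < 1) :
    ∃ M : ℝ, 0 < M ∧ ∀ f : ℂ → ℂ, memHw ω f →
      ∀ p : ℂ, ‖p‖ ≤ ρ → ‖f p‖ ≤ M * Real.sqrt (hwNormSq ω f) := by
  obtain ⟨κ, hκ, hev⟩ := bergman_eval hω hpos hρ0 hρ
  have hpi := Real.pi_pos
  refine ⟨1 + Real.sqrt (Real.pi / κ), by positivity, fun f hf p hp => ?_⟩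
  have hsub : Metric.closedBall (0 : ℂ) ρ ⊆ unitDisk := fun z hz => by
    have : ‖z‖ ≤ ρ := by simpa using hz
    exact this.trans_lt hρ
  set A := ∫ z in unitDisk, ‖deriv f z‖ ^ 2 * ω ‖z‖ with hA
  have hA0 : 0 ≤ A := setIntegral_nonneg isOpen_unitDisk.measurableSet fun z hz =>
    mul_nonneg (by positivity) (hpos _ ⟨norm_nonneg z, hz⟩).le
  have hN : hwNormSq ω f = ‖f 0‖ ^ 2 + A / Real.pi := rfl
  have h0 : ‖f 0‖ ≤ Real.sqrt (hwNormSq ω f) := by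
    refine Real.le_sqrt_of_sq_le ?_
    rw [hN]
    have : 0 ≤ A / Real.pi := by positivity
    linarith
  have hder : ∀ z ∈ Metric.closedBall (0 : ℂ) ρ,
      ‖deriv f z‖ ≤ Real.sqrt (Real.pi / κ) * Real.sqrt (hwNormSq ω f) := by
    intro z hz
    have h1 := hev (deriv f) (hf.1.deriv isOpen_unitDisk) hf.2 z (by simpa using hz)
    rw [← Real.sqrt_mul (by positivity)]
    refine Real.le_sqrt_of_sq_le ?_
    have h2 : A ≤ Real.pi * hwNormSq ω f := by
      rw [hN, mul_add, mul_div_cancel₀ _ hpi.ne']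
      have : 0 ≤ Real.pi * ‖f 0‖ ^ 2 := by positivity
      linarith
    rw [div_mul_eq_mul_div, le_div_iff₀ hκ]
    linarith
  have hmv := (convex_closedBall (0 : ℂ) ρ).norm_image_sub_le_of_norm_deriv_le
    (fun z hz => hf.1.differentiableAt (isOpen_unitDisk.mem_nhds (hsub hz))) hder
    (Metric.mem_closedBall_self hρ0) (show p ∈ Metric.closedBall (0 : ℂ) ρ by simpa using hp)
  rw [sub_zero] at hmv
  have h5 : Real.sqrt (Real.pi / κ) * Real.sqrt (hwNormSq ω f) * ‖p‖ ≤
      Real.sqrt (Real.pi / κ) * Real.sqrt (hwNormSq ω f) :=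
    mul_le_of_le_one_right (by positivity) (hp.trans hρ.le)
  have h6 : ‖f p‖ ≤ ‖f p - f 0‖ + ‖f 0‖ := by simpa using norm_add_le (f p - f 0) (f 0)
  linarith

/-! ### Approximation numbers -/

lemma approxNumber_le_norm {H : Type} [NormedAddCommGroup H] [InnerProductSpace ℂ H]
    (T : H →L[ℂ] H) {n : ℕ} (hn : 0 < n) : 0 ≤ approxNumber T n ∧ approxNumber T n ≤ ‖T‖ := by
  have hmem : ‖T‖ ∈ {c : ℝ | ∃ R : H →L[ℂ] H,
      Module.rank ℂ (LinearMap.range (R : H →ₗ[ℂ] H)) < (n : Cardinal) ∧ c = ‖T - R‖} := by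
    refine ⟨0, ?_, by simp⟩
    simpa [LinearMap.range_zero] using hn
  have hpos : ∀ c ∈ {c : ℝ | ∃ R : H →L[ℂ] H,
      Module.rank ℂ (LinearMap.range (R : H →ₗ[ℂ] H)) < (n : Cardinal) ∧ c = ‖T - R‖},
      0 ≤ c := by
    rintro c ⟨R, -, rfl⟩
    exact norm_nonneg _
  exact ⟨Real.sInf_nonneg hpos, csInf_le ⟨0, hpos⟩ hmem⟩

/-- Lower bound of approximation numbers by Bernstein numbers: an operator of rank `< n` kills a
nonzero combination of the `n` vectors `g i`, on which `T` is bounded below. -/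
lemma approxNumber_ge {H : Type} [NormedAddCommGroup H] [InnerProductSpace ℂ H]
    (T : H →L[ℂ] H) {n : ℕ} (hn : 0 < n) (g : Fin n → H) {G δ : ℝ} (hG : 0 < G)
    (hg : ∀ i, ‖g i‖ ≤ G)
    (hT : ∀ (l : Fin n → ℂ) (j : Fin n), δ * ‖l j‖ ≤ ‖T (∑ i, l i • g i)‖) (hδ : 0 < δ) :
    δ / (n * G) ≤ approxNumber T n := by
  have hn' : (0 : ℝ) < n := by exact_mod_cast hn
  refine le_csInf ⟨‖T‖, 0, by simpa [LinearMap.range_zero] using hn, by simp⟩ ?_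
  rintro c ⟨R, hR, rfl⟩
  let Λ : (Fin n → ℂ) →ₗ[ℂ] H := Fintype.linearCombination ℂ g
  have hΛ : ∀ l, Λ l = ∑ i, l i • g i := fun l => Fintype.linearCombination_apply ℂ g l
  have hker : ∃ l : Fin n → ℂ, l ≠ 0 ∧ R (Λ l) = 0 := by
    by_contra! hcon
    let Q : (Fin n → ℂ) →ₗ[ℂ] LinearMap.range (R : H →ₗ[ℂ] H) :=
      (R : H →ₗ[ℂ] H).rangeRestrict ∘ₗ Λ
    have hQ : Function.Injective Q := by
      rw [← LinearMap.ker_eq_bot, LinearMap.ker_eq_bot']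
      intro l hl
      by_contra hl0
      exact hcon l hl0 (congrArg Subtype.val hl)
    have := LinearMap.rank_le_of_injective Q hQ
    rw [rank_fin_fun] at this
    exact absurd hR (not_lt.2 this)
  obtain ⟨l, hl0, hRl⟩ := hker
  have hlpos : 0 < ‖l‖ := norm_pos_iff.2 hl0
  have h1 : δ * ‖l‖ ≤ ‖T (Λ l)‖ := by
    rw [← le_div_iff₀' hδ]
    refine (pi_norm_le_iff_of_nonneg (by positivity)).2 fun j => ?_
    rw [le_div_iff₀' hδ, hΛ]
    exact hT l j
  have h2 : ‖Λ l‖ ≤ n * (‖l‖ * G) := by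
    rw [hΛ]
    refine (norm_sum_le _ _).trans ?_
    calc ∑ i, ‖l i • g i‖ ≤ ∑ _i : Fin n, ‖l‖ * G := by
          refine Finset.sum_le_sum fun i _ => ?_
          rw [norm_smul]
          exact mul_le_mul (norm_le_pi_norm l i) (hg i) (norm_nonneg _) (norm_nonneg _)
      _ = n * (‖l‖ * G) := by simp
  have h3 : ‖T (Λ l)‖ ≤ ‖T - R‖ * ‖Λ l‖ := by
    have := (T - R).le_opNorm (Λ l)
    simpa [hRl] using this
  have h4 : δ * ‖l‖ ≤ ‖T - R‖ * (n * G) * ‖l‖ := by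
    calc _ ≤ ‖T - R‖ * (n * (‖l‖ * G)) := h1.trans (h3.trans (by gcongr))
      _ = _ := by ring
  rw [div_le_iff₀ (by positivity)]
  exact le_of_mul_le_mul_right h4 hlpos

/-! ### The lower bound for `a_n(C_φ)` -/

lemma tanh_mono {x y : ℝ} (h : x ≤ y) : Real.tanh x ≤ Real.tanh y := by
  rw [← Real.artanh_le_artanh_iff ⟨Real.neg_one_lt_tanh x, Real.tanh_lt_one x⟩
    ⟨Real.neg_one_lt_tanh y, Real.tanh_lt_one y⟩, Real.artanh_tanh, Real.artanh_tanh]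
  exact h

lemma moeb_self (a : ℂ) : moeb a a = 0 := by simp [moeb]

/-- For a suitable `z ∈ φ(D)`, the connected set `φ(D)` meets every pseudo-hyperbolic circle about
`z` of radius in `[0, r]`, at images of points of one fixed compact subdisc. -/
lemma exists_points {φ : ℂ → ℂ} (hφ : DifferentiableOn ℂ φ unitDisk)
    (hmap : Set.MapsTo φ unitDisk unitDisk) {r : ℝ}
    (hr : r < pseudoDiam (φ '' unitDisk)) :
    ∃ z ∈ unitDisk, ∃ ρ : ℝ, 0 ≤ ρ ∧ ρ < 1 ∧
      ∀ τ ∈ Set.Icc 0 r, ∃ p : ℂ, ‖p‖ ≤ ρ ∧ ‖moeb z (φ p)‖ = τ := by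
  have h0 : (0 : ℂ) ∈ unitDisk := by simp [unitDisk]
  have hne : {d : ℝ | ∃ z ∈ φ '' unitDisk, ∃ w ∈ φ '' unitDisk, d = pseudoDist z w}.Nonempty :=
    ⟨_, φ 0, ⟨0, h0, rfl⟩, φ 0, ⟨0, h0, rfl⟩, rfl⟩
  obtain ⟨d, ⟨_, ⟨a, ha, rfl⟩, _, ⟨b, hb, rfl⟩, rfl⟩, hd⟩ := exists_lt_of_lt_csSup hne hr
  refine ⟨φ a, hmap ha, max ‖a‖ ‖b‖, (norm_nonneg a).trans (le_max_left _ _), max_lt ha hb, ?_⟩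
  intro τ hτ
  have hseg : ∀ t ∈ Set.Icc (0:ℝ) 1, ‖AffineMap.lineMap a b t‖ ≤ max ‖a‖ ‖b‖ := by
    intro t ht
    have hconv := convex_closedBall (0 : ℂ) (max ‖a‖ ‖b‖)
    have := hconv.lineMap_mem (x := a) (y := b) (by simp) (by simp) ht
    simpa using this
  have hsegD : ∀ t ∈ Set.Icc (0:ℝ) 1, AffineMap.lineMap a b t ∈ unitDisk :=
    fun t ht => (hseg t ht).trans_lt (max_lt ha hb)
  have hc1 : ContinuousOn (fun t : ℝ => φ (AffineMap.lineMap a b t)) (Set.Icc 0 1) :=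
    hφ.continuousOn.comp (AffineMap.lineMap_continuous).continuousOn hsegD
  have hc : ContinuousOn (fun t : ℝ => ‖moeb (φ a) (φ (AffineMap.lineMap a b t))‖)
      (Set.Icc 0 1) := by
    have hm : ContinuousOn (moeb (φ a)) unitDisk := fun z hz =>
      (moeb_hasDerivAt (hmap ha) hz).continuousAt.continuousWithinAt
    exact (hm.comp hc1 fun t ht => hmap (hsegD t ht)).norm
  have hivt := intermediate_value_Icc zero_le_one hc
  obtain ⟨t, ht, hte⟩ := hivt (show τ ∈ _ by
    simp only [AffineMap.lineMap_apply_zero, AffineMap.lineMap_apply_one, moeb_self, norm_zero]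
    exact ⟨hτ.1, hτ.2.trans hd.le⟩)
  exact ⟨AffineMap.lineMap a b t, hseg t ht, hte⟩

/-- The quantitative lower bound. The `n` points on the segment are chosen with moduli
`tanh (k U / n)`, where `tanh U = r`. -/
lemma approxNumber_lower {ω : ℝ → ℝ} (hω : ContinuousOn ω (Set.Ico 0 1))
    (hpos : ∀ r ∈ Set.Ico (0:ℝ) 1, 0 < ω r) (hωi : IntegrableOn ω (Set.Ico 0 1))
    {H : Type} [NormedAddCommGroup H] [InnerProductSpace ℂ H]
    (ι : H →ₗ[ℂ] (ℂ → ℂ)) (hmem : ∀ g : H, memHw ω (ι g))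
    (hnorm : ∀ g : H, ‖g‖ ^ 2 = hwNormSq ω (ι g))
    (hsurj : ∀ f : ℂ → ℂ, memHw ω f → ∃ g : H, ∀ z ∈ unitDisk, ι g z = f z)
    {φ : ℂ → ℂ} (hφ : DifferentiableOn ℂ φ unitDisk) (hmap : Set.MapsTo φ unitDisk unitDisk)
    (T : H →L[ℂ] H) (hT : ∀ g : H, ∀ z ∈ unitDisk, ι (T g) z = ι g (φ z))
    {r : ℝ} (hr0 : 0 < r) (hr1 : r < 1) (hr : r < pseudoDiam (φ '' unitDisk)) :
    ∃ A : ℝ, 0 < A ∧ ∀ n : ℕ, 0 < n →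
      Real.exp (-(Real.pi / Real.artanh r) * n) / (A * n ^ 2) ≤ approxNumber T n := by
  obtain ⟨z, hz, ρ, hρ0, hρ1, hpt⟩ := exists_points hφ hmap hr
  obtain ⟨M, hM, heval⟩ := hw_eval hω hpos hρ0 hρ1
  set C := 1 / (1 - r) ^ 2 * (1 / (1 - ‖z‖) ^ 2) with hC
  set W := ∫ z in unitDisk, ω ‖z‖ with hW
  have hW0 : 0 ≤ W := setIntegral_nonneg isOpen_unitDisk.measurableSet fun z hz =>
    (hpos _ ⟨norm_nonneg z, hz⟩).le
  have hpi := Real.pi_pos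
  set B := Real.sqrt (1 + C ^ 2 * W / Real.pi) with hB
  have hB0 : 0 < B := Real.sqrt_pos.2 (by positivity)
  refine ⟨M * B, by positivity, fun n hn => ?_⟩
  have hn' : (0 : ℝ) < n := by exact_mod_cast hn
  have hn1 : (1 : ℝ) ≤ n := by exact_mod_cast hn
  set U := Real.artanh r with hU
  have hU0 : 0 < U := Real.artanh_pos ⟨hr0, hr1⟩
  have htU : Real.tanh U = r := Real.tanh_artanh ⟨by linarith, hr1⟩
  set h := U / n with hh
  have hh0 : 0 < h := by positivity
  have hτ : ∀ k : ℕ, k < n → Real.tanh (k * h) ∈ Set.Icc 0 r := by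
    intro k hk
    constructor
    · rw [← Real.tanh_zero]
      exact tanh_mono (by positivity)
    · rw [← htU]
      refine tanh_mono ?_
      have hk' : (k : ℝ) ≤ n := by exact_mod_cast hk.le
      calc (k : ℝ) * h ≤ n * h := by gcongr
        _ = U := by rw [hh]; field_simp
  have hp : ∀ k : ℕ, ∃ p : ℂ, k < n → ‖p‖ ≤ ρ ∧ ‖moeb z (φ p)‖ = Real.tanh (k * h) := by
    intro k
    by_cases hk : k < n
    · obtain ⟨p, hp⟩ := hpt _ (hτ k hk)
      exact ⟨p, fun _ => hp⟩
    · exact ⟨0, fun h => absurd h hk⟩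
  choose p hp using hp
  set v : ℕ → ℂ := fun k => moeb z (φ (p k)) with hv
  have hvn : ∀ k < n, ‖v k‖ = Real.tanh (k * h) := fun k hk => (hp k hk).2
  set f : ℕ → ℂ → ℂ := fun j ζ => ∏ k ∈ (Finset.range n).erase j, moeb (v k) (moeb z ζ) with hf
  have hftest : ∀ j, TestFn (((Finset.range n).erase j).card * C) (f j) := by
    intro j
    refine TestFn.prod _ fun k hk => ?_
    have hkn := Finset.mem_range.1 (Finset.mem_of_mem_erase hk)
    exact testFn_moeb_comp ((hvn k hkn).trans_le (hτ k hkn).2) hr1 hz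
  have hfmem := fun j => testFn_memHw hω hpos hωi (hftest j)
  choose g hg using fun j => hsurj (f j) (hfmem j).1
  have hgn : ∀ j, ‖g j‖ ≤ n * B := by
    intro j
    have h1 : ‖g j‖ ^ 2 ≤ 1 + (((Finset.range n).erase j).card * C) ^ 2 * W / Real.pi := by
      rw [hnorm, hwNormSq_congr (hg j)]
      exact (hfmem j).2
    have hcard : (((Finset.range n).erase j).card : ℝ) ≤ n := by
      have := (Finset.range n).card_erase_le (a := j)
      rw [Finset.card_range] at this
      exact_mod_cast this
    have h2 : ‖g j‖ ^ 2 ≤ (n * B) ^ 2 := by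
      rw [mul_pow, hB, Real.sq_sqrt (by positivity)]
      have hC0 : 0 ≤ C := by positivity
      calc _ ≤ 1 + (((Finset.range n).erase j).card * C) ^ 2 * W / Real.pi := h1
        _ ≤ (n : ℝ) ^ 2 + (n * C) ^ 2 * W / Real.pi := by
            gcongr
            exact one_le_pow₀ hn1
        _ = _ := by ring
    exact le_of_sq_le_sq h2 (by positivity)
  have hTl : ∀ (l : Fin n → ℂ) (j : Fin n),
      Real.exp (-(Real.pi / h)) / M * ‖l j‖ ≤ ‖T (∑ i, l i • g i)‖ := by
    intro l j
    obtain ⟨hpρ, -⟩ := hp j j.2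
    have hpD : p j ∈ unitDisk := hpρ.trans_lt hρ1
    have h1 := heval _ (hmem (T (∑ i, l i • g i))) (p j) hpρ
    rw [← hnorm, Real.sqrt_sq (norm_nonneg _), hT _ _ hpD] at h1
    have h2 : ι (∑ i, l i • g i) (φ (p j)) = l j * f j (φ (p j)) := by
      rw [map_sum, Finset.sum_apply, Finset.sum_eq_single j]
      · rw [map_smul, Pi.smul_apply, hg _ _ (hmap hpD), smul_eq_mul]
      · intro i _ hij
        rw [map_smul, Pi.smul_apply, hg _ _ (hmap hpD), smul_eq_mul]
        -- The factor of index `j` of the product `f i` vanishes at `φ (p j)`.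
        have : f i (φ (p j)) = 0 := by
          refine Finset.prod_eq_zero (i := (j : ℕ)) ?_ (moeb_self _)
          rw [Finset.mem_erase, Finset.mem_range]
          exact ⟨fun h => hij (Fin.ext h.symm), j.2⟩
        rw [this, mul_zero]
      · simp
    rw [h2, norm_mul] at h1
    have h3 : Real.exp (-(Real.pi / h)) ≤ ‖f j (φ (p j))‖ := by
      have := blaschke_lower hh0 j.2 hvn
      simpa only [hf, norm_prod] using this
    have h4 : Real.exp (-(Real.pi / h)) * ‖l j‖ ≤ M * ‖T (∑ i, l i • g i)‖ := by
      refine le_trans ?_ h1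
      rw [mul_comm]
      gcongr
    rw [div_mul_eq_mul_div, div_le_iff₀ hM]
    linarith
  have hfin := approxNumber_ge T hn (fun i : Fin n => g i) (G := n * B) (by positivity)
    (fun i => hgn i) hTl (by positivity)
  refine le_of_eq_of_le ?_ hfin
  rw [div_div, show -(Real.pi / h) = -(Real.pi / U) * n by rw [hh]; field_simp]
  congr 1
  ring

/-- Polynomial factors do not affect the limit of the `n`-th root. -/
lemma tendsto_lower (κ : ℝ) {A : ℝ} (hA : 0 < A) :
    Tendsto (fun n : ℕ => (Real.exp (-κ * n) / (A * n ^ 2)) ^ ((n : ℝ)⁻¹)) atTop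
      (nhds (Real.exp (-κ))) := by
  have h1 : Tendsto (fun n : ℕ => (n : ℝ) ^ ((n : ℝ)⁻¹)) atTop (nhds 1) := by
    simpa only [one_div, Function.comp_def] using
      tendsto_rpow_div.comp (tendsto_natCast_atTop_atTop (R := ℝ))
  have h2 : Tendsto (fun n : ℕ => A ^ ((n : ℝ)⁻¹)) atTop (nhds 1) := by
    have := ((Real.continuous_const_rpow hA.ne').tendsto 0).comp
      (tendsto_inv_atTop_nhds_zero_nat (𝕜 := ℝ))
    simpa [Function.comp_def] using this
  have h3 := (tendsto_const_nhds (x := Real.exp (-κ))).div (h2.mul (h1.pow 2)) (by simp)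
  simp only [one_pow, mul_one, div_one] at h3
  refine h3.congr' ?_
  filter_upwards [eventually_gt_atTop 0] with n hn
  have hn' : (0 : ℝ) < n := by exact_mod_cast hn
  rw [Pi.div_apply, Real.div_rpow (Real.exp_pos _).le (by positivity),
    Real.mul_rpow hA.le (by positivity), ← Real.exp_mul, mul_assoc, mul_inv_cancel₀ hn'.ne',
    mul_one, ← Real.rpow_natCast, ← Real.rpow_natCast, ← Real.rpow_mul hn'.le,
    ← Real.rpow_mul hn'.le, mul_comm (n : ℝ)⁻¹]

/-- There is an absolute constant `c > 0` such that for every weighted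
analytic Hilbert space `H_ω`, every symbol `φ` of `H_ω` and every `0 < r < 1`: if the
pseudo-hyperbolic diameter of `φ(D)` is `> r`, then
`β⁻(C_φ) = liminf aₙ(C_φ)^{1/n} ≥ exp(-c / log(1/(1-r)))`. -/
theorem betaMinus_ge_of_pseudoDiam :
    ∃ c : ℝ, 0 < c ∧
      ∀ (ω : ℝ → ℝ), ContinuousOn ω (Set.Ico 0 1) →
        (∀ r ∈ Set.Ico (0:ℝ) 1, 0 < ω r) → IntegrableOn ω (Set.Ico 0 1) →
      ∀ (H : Type) [NormedAddCommGroup H] [InnerProductSpace ℂ H] [CompleteSpace H],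
      ∀ ι : H →ₗ[ℂ] (ℂ → ℂ),
        (∀ g : H, memHw ω (ι g)) →
        (∀ g : H, ‖g‖ ^ 2 = hwNormSq ω (ι g)) →
        (∀ f : ℂ → ℂ, memHw ω f → ∃ g : H, ∀ z ∈ unitDisk, ι g z = f z) →
        (∀ g : H, (∀ z ∈ unitDisk, ι g z = 0) → g = 0) →
      ∀ φ : ℂ → ℂ, DifferentiableOn ℂ φ unitDisk → Set.MapsTo φ unitDisk unitDisk →
        (∀ f : ℂ → ℂ, memHw ω f → memHw ω (f ∘ φ)) →
      ∀ Cφ : H →L[ℂ] H, (∀ g : H, ∀ z ∈ unitDisk, ι (Cφ g) z = ι g (φ z)) →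
      ∀ r : ℝ, 0 < r → r < 1 → r < pseudoDiam (φ '' unitDisk) →
        Real.exp (-(c / Real.log (1 / (1 - r))))
          ≤ Filter.liminf (fun n : ℕ => approxNumber Cφ n ^ ((n : ℝ)⁻¹)) Filter.atTop := by
  refine ⟨2 * Real.pi, by positivity, ?_⟩
  intro ω hω hpos hωi H _ _ _ ι hmem hnorm hsurj _ φ hφ hmap _ T hT r hr0 hr1 hr
  obtain ⟨A, hA, hlow⟩ :=
    approxNumber_lower hω hpos hωi ι hmem hnorm hsurj hφ hmap T hT hr0 hr1 hr
  have hpi := Real.pi_pos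
  have hU0 : 0 < Real.artanh r := Real.artanh_pos ⟨hr0, hr1⟩
  have hr' : 0 < 1 - r := by linarith
  have hL0 : 0 < Real.log (1 / (1 - r)) := by
    refine Real.log_pos ?_
    rw [lt_div_iff₀ hr']
    linarith
  have hUL : Real.log (1 / (1 - r)) ≤ 2 * Real.artanh r := by
    rw [Real.artanh_eq_half_log ⟨by linarith, hr1.le⟩]
    have : Real.log (1 / (1 - r)) ≤ Real.log ((1 + r) / (1 - r)) := by
      refine Real.log_le_log (by positivity) ?_
      gcongr
      linarith
    linarith
  have hlim := tendsto_lower (Real.pi / Real.artanh r) hA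
  calc Real.exp (-(2 * Real.pi / Real.log (1 / (1 - r))))
      ≤ Real.exp (-(Real.pi / Real.artanh r)) := by
        rw [Real.exp_le_exp, neg_le_neg_iff, div_le_div_iff₀ hU0 hL0]
        nlinarith
    _ = liminf (fun n : ℕ => (Real.exp (-(Real.pi / Real.artanh r) * n) / (A * n ^ 2))
          ^ ((n : ℝ)⁻¹)) atTop := hlim.liminf_eq.symm
    _ ≤ _ := by
        refine liminf_le_liminf ?_ hlim.isBoundedUnder_ge ?_
        · filter_upwards [eventually_gt_atTop 0] with n hn
          exact Real.rpow_le_rpow (by positivity) (hlow n hn) (by positivity)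
        · refine isCoboundedUnder_ge_of_eventually_le atTop (x := max ‖T‖ 1) ?_
          filter_upwards [eventually_gt_atTop 0] with n hn
          obtain ⟨h0, h1⟩ := approxNumber_le_norm T hn
          have hn1 : (1 : ℝ) ≤ n := by exact_mod_cast hn
          calc approxNumber T n ^ ((n : ℝ)⁻¹) ≤ (max ‖T‖ 1) ^ ((n : ℝ)⁻¹) :=
                Real.rpow_le_rpow h0 (h1.trans (le_max_left _ _)) (by positivity)
            _ ≤ (max ‖T‖ 1) ^ (1 : ℝ) :=
                Real.rpow_le_rpow_of_exponent_le (le_max_right _ _) (inv_le_one_of_one_le₀ hn1)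
            _ = _ := Real.rpow_one _

end
end

section
/- Let H_ω be a weighted analytic Hilbert space, let φ be an analytic self-map of the unit disk D with φ ∈ H_ω and ρ := ‖φ‖_∞ < 1, and let ε > 0 satisfy ρ e^ε < 1. Then there is a constant K (depending only on ω, ε and φ) such that for every f(z) = Σ_{k≥0} b_k z^k in the unit ball of H_ω and every integer l ≥ 1, writing g = S_l f for the partial sum g(z) = Σ_{k=0}^{l−1} b_k z^k, one has ‖f∘φ − g∘φ‖ ≤ K ρ^l e^{εl}, where ‖·‖ is the norm of H_ω. -/
/-!
Fix `R = e^{-ε}`, so that `ρ / R = ρ e^ε < 1`. On a closed annulus `R ≤ |z| ≤ R' < 1` the weight is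
bounded below by a positive constant, so for `f` in the unit ball of `H_ω` the integral of `|f'|`
over that annulus is bounded by a constant depending only on `ω` and `R`. Averaging Cauchy's
coefficient estimate for `f'` over the circles of the annulus (`taylorCoeff_le_circle`,
`annulus_lower`) shows that the `j`-th Taylor coefficient of `f'` is at most `C R⁻ʲ`
(`exists_coeff_bound`).

Let `h = f - S_l f`. Then `h'` is the remainder of order `l - 1` of the Taylor series of `f'`, so on
`|w| ≤ ρ` it is bounded by `B = C (ρ/R)^{l-1} / (1 - ρ/R)` (`norm_deriv_remainder_le`). Since
`h(0) = 0` for `l ≥ 1` and `φ` takes values in `|w| ≤ ρ`, the chain rule gives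
`‖h ∘ φ‖² ≤ B² (ρ² + ∫ |φ'|² ω dA)` (`comp_estimate`). One power of `ρ e^ε` is absorbed into the
constant when `ρ > 0`; when `ρ = 0` the right-hand factor vanishes.
-/

open MeasureTheory Set Filter
open scoped ENNReal NNReal

noncomputable section

/-- Cauchy's estimate in mean form: a Taylor coefficient is controlled by the mean of `‖g‖`
over any circle of radius at least `R` in the disk. -/
lemma taylorCoeff_le_circle {g : ℂ → ℂ} (hg : DifferentiableOn ℂ g unitDisk)
    {R r : ℝ} (hR : 0 < R) (hRr : R ≤ r) (hr : r < 1) (j : ℕ) :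
    ‖taylorCoeff g j‖ * R ^ j ≤
      (2 * Real.pi)⁻¹ * ∫ θ in (0:ℝ)..2 * Real.pi, ‖g (circleMap 0 r θ)‖ := by
  have hr0 : 0 < r := hR.trans_le hRr
  have hd : DifferentiableOn ℂ g (Metric.closedBall 0 (⟨r, hr0.le⟩ : ℝ≥0)) := by
    refine hg.mono ?_
    intro z hz
    have : ‖z‖ ≤ r := by simpa using hz
    exact this.trans_lt hr
  have hp := hd.hasFPowerSeriesOnBall (by exact_mod_cast hr0)
  have hc : taylorCoeff g j = cauchyPowerSeries g 0 r j fun _ => 1 := by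
    have h := hp.factorial_smul 1 j
    rw [← iteratedDeriv_eq_iteratedFDeriv] at h
    rw [taylorCoeff, ← h, nsmul_eq_mul]
    have hj : (j.factorial : ℂ) ≠ 0 := Nat.cast_ne_zero.2 (Nat.factorial_ne_zero j)
    exact mul_div_cancel_left₀ _ hj
  have hn : ‖taylorCoeff g j‖ = ‖cauchyPowerSeries g 0 r j‖ := by
    rw [hc, FormalMultilinearSeries.norm_apply_eq_norm_coef]; rfl
  have hb := norm_cauchyPowerSeries_le g 0 r j
  rw [← hn, abs_of_pos hr0] at hb
  have hI : 0 ≤ ∫ θ in (0:ℝ)..2 * Real.pi, ‖g (circleMap 0 r θ)‖ :=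
    intervalIntegral.integral_nonneg (by positivity) fun _ _ => norm_nonneg _
  calc ‖taylorCoeff g j‖ * R ^ j ≤ ‖taylorCoeff g j‖ * r ^ j := by gcongr
    _ ≤ ((2 * Real.pi)⁻¹ * ∫ θ in (0:ℝ)..2 * Real.pi, ‖g (circleMap 0 r θ)‖) * r⁻¹ ^ j * r ^ j := by
        gcongr
    _ = _ := by
        rw [mul_assoc, ← mul_pow, inv_mul_cancel₀ hr0.ne', one_pow, mul_one]

/-- Integrating a lower bound for circle means in polar coordinates over an annulus. -/
lemma annulus_lower {g : ℂ → ℂ} (hg : ContinuousOn g unitDisk)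
    {R R' T : ℝ} (hR : 0 < R) (hR' : R' < 1)
    (hT : ∀ r ∈ Ioo R R', T ≤
      (2 * Real.pi)⁻¹ * ∫ θ in (0:ℝ)..2 * Real.pi, ‖g (circleMap 0 r θ)‖) :
    ENNReal.ofReal (2 * Real.pi * T) * ENNReal.ofReal R * ENNReal.ofReal (R' - R) ≤
      ∫⁻ z in {z : ℂ | ‖z‖ ∈ Ioo R R'}, ENNReal.ofReal ‖g z‖ := by
  set A : Set ℂ := {z : ℂ | ‖z‖ ∈ Ioo R R'} with hA
  have hAo : IsOpen A := isOpen_Ioo.preimage continuous_norm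
  have hAD : A ⊆ unitDisk := fun z hz => hz.2.trans hR'
  set F : ℂ → ℝ≥0∞ := A.indicator fun z => ENNReal.ofReal ‖g z‖ with hF
  have hFm : Measurable F := by
    classical
    rw [hF, ← Set.piecewise_eq_indicator]
    refine ContinuousOn.measurable_piecewise ?_ continuousOn_const hAo.measurableSet
    exact ENNReal.continuous_ofReal.comp_continuousOn (hg.mono hAD).norm
  have hpolar : ∀ r θ : ℝ, Complex.polarCoord.symm (r, θ) = circleMap 0 r θ := by
    intro r θ
    rw [Complex.polarCoord_symm_apply, circleMap, zero_add, Complex.exp_mul_I]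
    simp
  rw [← lintegral_indicator hAo.measurableSet, ← hF, ← Complex.lintegral_comp_polarCoord_symm F]
  have htar : polarCoord.target = (Ioi (0:ℝ) ×ˢ Ioo (-Real.pi) Real.pi) := rfl
  have hcm : Measurable fun p : ℝ × ℝ => Complex.polarCoord.symm p := by
    have : (fun p : ℝ × ℝ => Complex.polarCoord.symm p) = fun p => circleMap 0 p.1 p.2 :=
      funext fun p => hpolar p.1 p.2
    rw [this]
    unfold circleMap
    fun_prop
  have hmeas : Measurable fun p : ℝ × ℝ => ENNReal.ofReal p.1 • F (Complex.polarCoord.symm p) :=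
    (ENNReal.measurable_ofReal.comp measurable_fst).smul (hFm.comp hcm)
  rw [htar, Measure.volume_eq_prod, setLIntegral_prod _ hmeas.aemeasurable]
  have hsub : Ioo R R' ⊆ Ioi (0:ℝ) := fun r hr => hR.trans hr.1
  refine le_trans ?_ (lintegral_mono_set hsub)
  rw [← Real.volume_Ioo, ← setLIntegral_const]
  refine setLIntegral_mono' measurableSet_Ioo fun r hr => ?_
  have hr0 : 0 < r := hR.trans hr.1
  have hmem : ∀ θ, circleMap 0 r θ ∈ A := by
    intro θ
    simpa [hA, abs_of_pos hr0] using hr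
  have hcont : Continuous fun θ : ℝ => ‖g (circleMap 0 r θ)‖ :=
    (hg.comp_continuous (continuous_circleMap 0 r) fun θ => hAD (hmem θ)).norm
  have hper : ∫ θ in (0:ℝ)..2 * Real.pi, ‖g (circleMap 0 r θ)‖ =
      ∫ θ in Ioo (-Real.pi) Real.pi, ‖g (circleMap 0 r θ)‖ := by
    have hP : Function.Periodic (fun θ : ℝ => ‖g (circleMap 0 r θ)‖) (2 * Real.pi) := fun θ => by
      simp only [periodic_circleMap 0 r θ]
    have := hP.intervalIntegral_add_eq 0 (-Real.pi)
    rw [zero_add, show -Real.pi + 2 * Real.pi = Real.pi by ring] at this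
    rw [this, intervalIntegral.integral_of_le (by linarith [Real.pi_pos]),
      integral_Ioc_eq_integral_Ioo]
  have hT' : 2 * Real.pi * T ≤ ∫ θ in Ioo (-Real.pi) Real.pi, ‖g (circleMap 0 r θ)‖ := by
    have := hT r hr
    rwa [hper, ← div_eq_inv_mul, le_div_iff₀' (by positivity)] at this
  have hint : IntegrableOn (fun θ : ℝ => ‖g (circleMap 0 r θ)‖) (Ioo (-Real.pi) Real.pi) :=
    (hcont.integrableOn_Icc (a := -Real.pi) (b := Real.pi)).mono_set Ioo_subset_Icc_self
  have hval : ∀ θ, F (Complex.polarCoord.symm (r, θ)) =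
      ENNReal.ofReal ‖g (circleMap 0 r θ)‖ := fun θ => by
    rw [hpolar, hF, Set.indicator_of_mem (hmem θ)]
  simp only [hval, smul_eq_mul]
  rw [lintegral_const_mul' _ _ ENNReal.ofReal_ne_top,
    ← ofReal_integral_eq_lintegral_ofReal hint (Eventually.of_forall fun _ => norm_nonneg _),
    mul_comm]
  gcongr
  exact hr.1.le

/-- The Taylor coefficients of `f'`, for `f` in the unit ball of `H_ω`, grow at most like
`R⁻ʲ`, for every fixed `R < 1`, uniformly in `f`. -/
lemma exists_coeff_bound {ω : ℝ → ℝ} (hω_cont : ContinuousOn ω (Set.Ico 0 1))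
    (hω_pos : ∀ r ∈ Set.Ico (0:ℝ) 1, 0 < ω r) {R : ℝ} (hR : 0 < R) (hR1 : R < 1) :
    ∃ C : ℝ, 0 < C ∧ ∀ f : ℂ → ℂ, memHw ω f → hwNormSq ω f ≤ 1 →
      ∀ j : ℕ, ‖taylorCoeff (deriv f) j‖ * R ^ j ≤ C := by
  obtain ⟨R', hRR', hR'⟩ := exists_between hR1
  obtain ⟨m, hm, hmω⟩ : ∃ m, 0 < m ∧ ∀ r ∈ Icc R R', m ≤ ω r := by
    have hsub : Icc R R' ⊆ Ico 0 1 := fun r hr => ⟨hR.le.trans hr.1, hr.2.trans_lt hR'⟩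
    obtain ⟨r₀, hr₀, hmin⟩ := isCompact_Icc.exists_isMinOn (nonempty_Icc.2 hRR'.le)
      (hω_cont.mono hsub)
    exact ⟨ω r₀, hω_pos _ (hsub hr₀), fun r hr => hmin hr⟩
  have hd : 0 < R' - R := sub_pos.2 hRR'
  have hpi := Real.pi_pos
  refine ⟨(Real.pi + Real.pi / m) / (2 * Real.pi * R * (R' - R)), by positivity, ?_⟩
  intro f hf hf1 j
  have hgd : DifferentiableOn ℂ (deriv f) unitDisk := hf.1.deriv isOpen_unitDisk
  set T := ‖taylorCoeff (deriv f) j‖ * R ^ j with hTdef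
  have hT0 : 0 ≤ T := by positivity
  have hlow := annulus_lower hgd.continuousOn hR hR' (T := T)
    fun r hr => taylorCoeff_le_circle hgd hR hr.1.le (hr.2.trans hR') j
  set A : Set ℂ := {z : ℂ | ‖z‖ ∈ Ioo R R'} with hA
  have hAm : MeasurableSet A := (isOpen_Ioo.preimage continuous_norm).measurableSet
  have hAD : A ⊆ unitDisk := fun z hz => hz.2.trans hR'
  have hnn : ∀ z ∈ unitDisk, 0 ≤ ‖deriv f z‖ ^ 2 * ω ‖z‖ := fun z hz =>
    mul_nonneg (by positivity) (hω_pos _ ⟨norm_nonneg z, hz⟩).le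
  have hE : ∫ z in unitDisk, ‖deriv f z‖ ^ 2 * ω ‖z‖ ≤ Real.pi := by
    have h1 := hf1
    rw [hwNormSq] at h1
    have h2 : (∫ z in unitDisk, ‖deriv f z‖ ^ 2 * ω ‖z‖) / Real.pi ≤ 1 := by
      nlinarith [sq_nonneg ‖f 0‖]
    rwa [div_le_one hpi] at h2
  have hup : ∫⁻ z in A, ENNReal.ofReal ‖deriv f z‖ ≤
      ENNReal.ofReal Real.pi + ENNReal.ofReal (1 / m) * ENNReal.ofReal Real.pi := by
    calc ∫⁻ z in A, ENNReal.ofReal ‖deriv f z‖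
        ≤ ∫⁻ z in A, (1 + ENNReal.ofReal (1 / m) *
            ENNReal.ofReal (‖deriv f z‖ ^ 2 * ω ‖z‖)) := by
          refine setLIntegral_mono' hAm fun z hz => ?_
          have h0 := hnn z (hAD hz)
          rw [← ENNReal.ofReal_one, ← ENNReal.ofReal_mul (by positivity),
            ← ENNReal.ofReal_add zero_le_one (by positivity)]
          refine ENNReal.ofReal_le_ofReal ?_
          have h1 : ‖deriv f z‖ ^ 2 ≤ 1 / m * (‖deriv f z‖ ^ 2 * ω ‖z‖) := by
            rw [one_div, ← div_eq_inv_mul, le_div_iff₀ hm]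
            exact mul_le_mul_of_nonneg_left (hmω _ ⟨hz.1.le, hz.2.le⟩) (by positivity)
          nlinarith [sq_nonneg (‖deriv f z‖ - 1), sq_nonneg ‖deriv f z‖]
      _ = volume A + ENNReal.ofReal (1 / m) *
            ∫⁻ z in A, ENNReal.ofReal (‖deriv f z‖ ^ 2 * ω ‖z‖) := by
          rw [lintegral_add_left measurable_const, setLIntegral_one,
            lintegral_const_mul' _ _ ENNReal.ofReal_ne_top]
      _ ≤ _ := by
          gcongr
          · refine (measure_mono hAD).trans ?_
            rw [unitDisk_eq_ball, Complex.volume_ball]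
            simp [ENNReal.ofReal, Real.toNNReal_of_nonneg hpi.le]
            rfl
          · refine (lintegral_mono_set hAD).trans ?_
            rw [← ofReal_integral_eq_lintegral_ofReal hf.2
              ((ae_restrict_iff' isOpen_unitDisk.measurableSet).2 (Eventually.of_forall hnn))]
            exact ENNReal.ofReal_le_ofReal hE
  have h := hlow.trans hup
  rw [← ENNReal.ofReal_mul (by positivity), ← ENNReal.ofReal_mul (by positivity),
    ← ENNReal.ofReal_mul (by positivity), ← ENNReal.ofReal_add (by positivity) (by positivity),
    ENNReal.ofReal_le_ofReal_iff (by positivity)] at h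
  rw [le_div_iff₀ (by positivity)]
  calc T * (2 * Real.pi * R * (R' - R)) = 2 * Real.pi * T * R * (R' - R) := by ring
    _ ≤ _ := h
    _ = _ := by ring

/-! ### The remainder on a small disk -/

/-- The derivative of the `l`-th Taylor remainder of `f` is the `(l-1)`-st Taylor remainder of
`f'`, so coefficient bounds for `f'` give a geometric tail. -/
lemma norm_deriv_remainder_le {f : ℂ → ℂ} (hf : DifferentiableOn ℂ f unitDisk)
    {C R ρ : ℝ} (hR : 0 < R) (hR1 : R < 1) (hρ0 : 0 ≤ ρ) (hρR : ρ < R)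
    (hC : ∀ j, ‖taylorCoeff (deriv f) j‖ * R ^ j ≤ C)
    (n : ℕ) {w : ℂ} (hw : ‖w‖ ≤ ρ) :
    ‖deriv (fun w => f w - ∑ k ∈ Finset.range (n + 1), taylorCoeff f k * w ^ k) w‖ ≤
      C * (ρ / R) ^ n / (1 - ρ / R) := by
  have hwD : w ∈ unitDisk := hw.trans_lt (hρR.trans hR1)
  have hfw : HasDerivAt f (deriv f w) w :=
    (hf.differentiableAt (isOpen_unitDisk.mem_nhds hwD)).hasDerivAt
  have hcoef : ∀ j : ℕ, taylorCoeff f (j + 1) * ((j + 1 : ℕ) : ℂ) = taylorCoeff (deriv f) j := by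
    intro j
    rw [taylorCoeff, taylorCoeff, iteratedDeriv_succ', Nat.factorial_succ]
    have : ((j + 1 : ℕ) : ℂ) ≠ 0 := Nat.cast_ne_zero.2 (Nat.succ_ne_zero j)
    have h2 : (j.factorial : ℂ) ≠ 0 := Nat.cast_ne_zero.2 (Nat.factorial_ne_zero j)
    rw [Nat.cast_mul]
    field_simp
  have hder : deriv (fun w => f w - ∑ k ∈ Finset.range (n + 1), taylorCoeff f k * w ^ k) w =
      deriv f w - ∑ j ∈ Finset.range n, taylorCoeff (deriv f) j * w ^ j := by
    have hs : HasDerivAt (fun w => ∑ k ∈ Finset.range (n + 1), taylorCoeff f k * w ^ k)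
        (∑ k ∈ Finset.range (n + 1), taylorCoeff f k * (k * w ^ (k - 1))) w :=
      HasDerivAt.fun_sum fun k _ => (hasDerivAt_pow k w).const_mul _
    rw [(hfw.fun_sub hs).deriv, Finset.sum_range_succ']
    simp only [Nat.add_sub_cancel, ← mul_assoc, hcoef]
    simp
  have hsum : HasSum (fun j => taylorCoeff (deriv f) j * w ^ j) (deriv f w) := by
    have hgd : DifferentiableOn ℂ (deriv f) (Metric.ball 0 1) :=
      unitDisk_eq_ball ▸ hf.deriv isOpen_unitDisk
    have := Complex.hasSum_taylorSeries_on_ball hgd (z := w) (unitDisk_eq_ball ▸ hwD)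
    have he : (fun j => taylorCoeff (deriv f) j * w ^ j) =
        fun n : ℕ => ((n.factorial : ℂ))⁻¹ • (w - 0) ^ n • iteratedDeriv n (deriv f) 0 := by
      funext j
      simp only [taylorCoeff, sub_zero, smul_eq_mul]
      ring
    rw [he]
    exact this
  have hq0 : 0 ≤ ρ / R := by positivity
  have hq1 : ρ / R < 1 := (div_lt_one hR).2 hρR
  have hC0 : 0 ≤ C := le_trans (by positivity) (hC 0)
  rw [hder]
  have hgeo := (hasSum_geometric_of_lt_one hq0 hq1).mul_left (C * (ρ / R) ^ n)
  rw [← div_eq_mul_inv] at hgeo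
  refine ((hasSum_nat_add_iff' n).2 hsum).norm_le_of_bounded hgeo fun i => ?_
  rw [norm_mul, norm_pow]
  calc ‖taylorCoeff (deriv f) (i + n)‖ * ‖w‖ ^ (i + n)
      ≤ ‖taylorCoeff (deriv f) (i + n)‖ * ρ ^ (i + n) := by gcongr
    _ = ‖taylorCoeff (deriv f) (i + n)‖ * R ^ (i + n) * (ρ / R) ^ (i + n) := by
        rw [div_pow, mul_assoc, mul_div_cancel₀ _ (by positivity)]
    _ ≤ C * (ρ / R) ^ (i + n) := by gcongr; exact hC _
    _ = _ := by rw [pow_add]; ring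

/-! ### Composition with `φ` -/

/-- If `h(0) = 0` and `|h'| ≤ B` on the disk `|w| ≤ ρ`, which contains `φ(𝔻)`, then
`‖h ∘ φ‖² ≤ B² (ρ² + ∫ |φ'|² ω dA)`. -/
lemma comp_estimate {ω : ℝ → ℝ} (hω_cont : ContinuousOn ω (Set.Ico 0 1))
    (hω_pos : ∀ r ∈ Set.Ico (0:ℝ) 1, 0 < ω r) {φ h : ℂ → ℂ} (hφ_mem : memHw ω φ)
    (hφ_maps : Set.MapsTo φ unitDisk unitDisk)
    {ρ B : ℝ} (hρ1 : ρ < 1) (hφρ : ∀ z ∈ unitDisk, ‖φ z‖ ≤ ρ)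
    (hh : DifferentiableOn ℂ h unitDisk) (hh0 : h 0 = 0)
    (hB : ∀ w, ‖w‖ ≤ ρ → ‖deriv h w‖ ≤ B) :
    memHw ω (fun z => h (φ z)) ∧ hwNormSq ω (fun z => h (φ z)) ≤
      B ^ 2 * (ρ ^ 2 + (∫ z in unitDisk, ‖deriv φ z‖ ^ 2 * ω ‖z‖) / Real.pi) := by
  have h0D : (0 : ℂ) ∈ unitDisk := by simp [unitDisk]
  have hρ0 : 0 ≤ ρ := (norm_nonneg _).trans (hφρ 0 h0D)
  have hB0 : 0 ≤ B := (norm_nonneg _).trans (hB 0 (by simpa using hρ0))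
  have hdiff : DifferentiableOn ℂ (fun z => h (φ z)) unitDisk := hh.comp hφ_mem.1 hφ_maps
  have hωnn : ∀ z ∈ unitDisk, 0 ≤ ω ‖z‖ := fun z hz => (hω_pos _ ⟨norm_nonneg z, hz⟩).le
  have hD := isOpen_unitDisk.measurableSet
  have hptw : ∀ z ∈ unitDisk, ‖deriv (fun z => h (φ z)) z‖ ^ 2 * ω ‖z‖ ≤
      B ^ 2 * (‖deriv φ z‖ ^ 2 * ω ‖z‖) := by
    intro z hz
    have hd1 := hh.differentiableAt (isOpen_unitDisk.mem_nhds (hφ_maps hz))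
    have hd2 := hφ_mem.1.differentiableAt (isOpen_unitDisk.mem_nhds hz)
    have : deriv (fun z => h (φ z)) z = deriv h (φ z) * deriv φ z := deriv_comp z hd1 hd2
    rw [this, norm_mul, mul_pow, mul_assoc]
    have h1 := hωnn z hz
    have h2 := hB _ (hφρ z hz)
    gcongr
  have hint : IntegrableOn (fun z => ‖deriv (fun z => h (φ z)) z‖ ^ 2 * ω ‖z‖) unitDisk := by
    refine Integrable.mono' (hφ_mem.2.const_mul (B ^ 2)) ?_ ?_
    · exact ContinuousOn.aestronglyMeasurable
        ((((hdiff.deriv isOpen_unitDisk).continuousOn.norm).pow 2).mul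
          (continuousOn_weight hω_cont)) hD
    · refine (ae_restrict_iff' hD).2 (Eventually.of_forall fun z hz => ?_)
      rw [Real.norm_of_nonneg (mul_nonneg (by positivity) (hωnn z hz))]
      exact hptw z hz
  refine ⟨⟨hdiff, hint⟩, ?_⟩
  have hI := setIntegral_mono_on hint (hφ_mem.2.const_mul (B ^ 2)) hD hptw
  rw [integral_const_mul] at hI
  have hv : ‖h (φ 0)‖ ≤ B * ρ := by
    have hsub : Metric.closedBall (0 : ℂ) ρ ⊆ unitDisk := fun w hw => by
      have : ‖w‖ ≤ ρ := by simpa using hw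
      exact this.trans_lt hρ1
    have := (convex_closedBall (0 : ℂ) ρ).norm_image_sub_le_of_norm_deriv_le (𝕜 := ℂ) (f := h)
      (C := B) (x := 0) (y := φ 0)
      (fun w hw => hh.differentiableAt (isOpen_unitDisk.mem_nhds (hsub hw)))
      (fun w hw => hB w (by simpa using hw)) (by simpa using hρ0) (by simpa using hφρ 0 h0D)
    rw [hh0, sub_zero, sub_zero] at this
    exact this.trans (by gcongr; exact hφρ 0 h0D)
  have hv2 : ‖h (φ 0)‖ ^ 2 ≤ (B * ρ) ^ 2 := by gcongr
  have hI2 := div_le_div_of_nonneg_right hI Real.pi_pos.le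
  rw [hwNormSq, mul_add, ← mul_div_assoc, ← mul_pow]
  exact add_le_add hv2 hI2

/-- For `φ ∈ H_ω` with `ρ := ‖φ‖_∞ < 1` and `ε > 0` with `ρ e^ε < 1`,
there is a constant `K` such that for every `f` in the unit ball of `H_ω` and every `l ≥ 1`,
the partial sum `g = S_l f` satisfies `‖f∘φ - g∘φ‖ ≤ K ρ^l e^{εl}`. -/
theorem partial_sum_tail_bound
    (ω : ℝ → ℝ)
    (hω_cont : ContinuousOn ω (Set.Ico 0 1))
    (hω_pos : ∀ r ∈ Set.Ico (0:ℝ) 1, 0 < ω r)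
    (hω_int : IntegrableOn ω (Set.Ico 0 1))
    (φ : ℂ → ℂ)
    (hφ_diff : DifferentiableOn ℂ φ unitDisk)
    (hφ_maps : Set.MapsTo φ unitDisk unitDisk)
    (hφ_mem : memHw ω φ)
    (ρ : ℝ) (hρ_lub : IsLUB ((fun z => ‖φ z‖) '' unitDisk) ρ)
    (ε : ℝ) (hε : 0 < ε) (hρε : ρ * Real.exp ε < 1) :
    ∃ K : ℝ, 0 < K ∧
      ∀ f : ℂ → ℂ, memHw ω f → hwNormSq ω f ≤ 1 →
        ∀ l : ℕ, 1 ≤ l →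
          memHw ω (fun z => f (φ z) - ∑ k ∈ Finset.range l, taylorCoeff f k * φ z ^ k) ∧
          Real.sqrt (hwNormSq ω
              (fun z => f (φ z) - ∑ k ∈ Finset.range l, taylorCoeff f k * φ z ^ k))
            ≤ K * ρ ^ l * Real.exp (ε * (l : ℝ)) := by
  have h0D : (0 : ℂ) ∈ unitDisk := by simp [unitDisk]
  have hφρ : ∀ z ∈ unitDisk, ‖φ z‖ ≤ ρ := fun z hz => hρ_lub.1 (mem_image_of_mem _ hz)
  have hρ0 : 0 ≤ ρ := (norm_nonneg _).trans (hφρ 0 h0D)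
  set R := Real.exp (-ε) with hRdef
  have hR : 0 < R := Real.exp_pos _
  have hR1 : R < 1 := by simpa [hRdef] using hε
  have hq : ρ / R = ρ * Real.exp ε := by
    rw [hRdef, Real.exp_neg, div_inv_eq_mul]
  have hρR : ρ < R := by rwa [← div_lt_one hR, hq]
  obtain ⟨C, hC0, hC⟩ := exists_coeff_bound hω_cont hω_pos hR hR1
  set J := (∫ z in unitDisk, ‖deriv φ z‖ ^ 2 * ω ‖z‖) / Real.pi with hJ
  set q := ρ * Real.exp ε with hqdef
  have hq0 : 0 ≤ q := by positivity
  have hq1 : 0 < 1 - q := by linarith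
  -- When `ρ = 0` the map `φ` vanishes on the disk.
  have hzero : ρ = 0 → ρ ^ 2 + J = 0 := by
    intro h
    have hφ0 : ∀ z ∈ unitDisk, φ z = 0 := fun z hz => by
      have := hφρ z hz
      rw [h] at this
      exact norm_le_zero_iff.1 this
    have : ∫ z in unitDisk, ‖deriv φ z‖ ^ 2 * ω ‖z‖ = 0 := by
      rw [setIntegral_congr_fun (g := fun _ => (0:ℝ)) isOpen_unitDisk.measurableSet]
      · simp
      · intro z hz
        have he : φ =ᶠ[nhds z] fun _ => 0 :=
          Filter.eventually_of_mem (isOpen_unitDisk.mem_nhds hz) hφ0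
        simp [he.deriv_eq]
    rw [hJ, this, h]; simp
  -- For `ρ = 0` the first summand is the junk value `0`; adding `1` keeps the constant positive.
  refine ⟨C / (1 - q) * Real.sqrt (ρ ^ 2 + J) / q + 1, by positivity, ?_⟩
  intro f hf hf1 l hl
  obtain ⟨n, rfl⟩ : ∃ n, l = n + 1 := ⟨l - 1, by omega⟩
  have hh : DifferentiableOn ℂ
      (fun w => f w - ∑ k ∈ Finset.range (n + 1), taylorCoeff f k * w ^ k) unitDisk :=
    hf.1.sub (by fun_prop)
  have hh0 : f 0 - ∑ k ∈ Finset.range (n + 1), taylorCoeff f k * (0:ℂ) ^ k = 0 := by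
    rw [Finset.sum_range_succ']
    simp [taylorCoeff]
  obtain ⟨hmem, hle⟩ := comp_estimate hω_cont hω_pos hφ_mem hφ_maps (hρR.trans hR1) hφρ hh hh0
    fun w hw => norm_deriv_remainder_le hf.1 hR hR1 hρ0 hρR (hC f hf hf1) n hw
  refine ⟨hmem, (Real.sqrt_le_sqrt hle).trans ?_⟩
  have hpow : ρ ^ (n + 1) * Real.exp (ε * ((n + 1 : ℕ) : ℝ)) = q ^ (n + 1) := by
    rw [hqdef, mul_pow, mul_comm ε, Real.exp_nat_mul]
  rw [← hJ, hq, mul_assoc _ (ρ ^ (n + 1)), hpow, Real.sqrt_mul (sq_nonneg _),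
    Real.sqrt_sq (by positivity)]
  rcases hρ0.eq_or_lt with h | h
  · rw [hzero h.symm, Real.sqrt_zero, mul_zero]
    positivity
  · have hqp : 0 < q := by positivity
    have hqn : 0 ≤ q ^ (n + 1) := by positivity
    calc C * q ^ n / (1 - q) * Real.sqrt (ρ ^ 2 + J)
        = C / (1 - q) * Real.sqrt (ρ ^ 2 + J) / q * q ^ (n + 1) := by
          field_simp
          ring
      _ ≤ _ := by gcongr; linarith

end
end
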